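/- arXiv:2110.05996 — 3 statements merged into one kernel-verified Lean document; each statement's English description precedes it below -/
import Mathlib

section
/- Let P ⊂ ℝ^d be a full-dimensional polytope with facet set ℱ, and let p be a point not in P. For F ∈ ℱ let F̂ = conv(F ∪ {p}), and let sgn(F) = 1 if p lies in the closed halfspace bounded by the affine span of F that contains P, and sgn(F) = −1 otherwise. Then vol(P) = Σ_{F ∈ ℱ} sgn(F)·vol(F̂). -/
/-!
The identity holds pointwise almost everywhere: for almost every `x`,
`1_P(x) = ∑ sgn(F) · 1_{F̂}(x)`, and integrating gives the claim.

Fix `x ≠ p` and consider the line `t ↦ p + t (x - p)`. A point `x` lies in the pyramid `F̂` iff the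
line meets `F` at some time `t ≥ 1`. If the line meets `P` at positive times, then for generic `x`
it does so exactly during an interval `[t₀, t₁]` with `0 < t₀ < t₁`, enters `P` through a single
facet `F₀`, leaves through a single facet `F₁`, and meets no other facet. The hyperplane functional
of `F₀` decreases along the line, so `sgn F₀ = -1`; likewise `sgn F₁ = 1`. Hence the sum at `x` is
`[1 ≤ t₁] - [1 ≤ t₀]`, which is `1_P(x) = [t₀ ≤ 1 ≤ t₁]` because `t₀ ≠ 1`.

The generic points are those that avoid finitely many proper affine subspaces:

* the hyperplanes spanned by the facets;
* the spans of `p` with a subset of the vertices. Given a supporting hyperplane at a point `b ≠ p`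
  of the line, the face it cuts out is the hull of the vertices on it; were its dimension at most
  `d - 2`, the span of `p` and those vertices would be proper and contain `x`. So every supporting
  hyperplane touching the line at a point of `P` cuts out a facet (`isFacetOf_of_generic`). Applied
  to hyperplanes supporting `P` at a boundary point, this gives the entry and exit facets; applied
  to a hyperplane containing the whole line, it shows that a line meeting `P` meets its interior,
  so `t₀ < t₁`;
* the spans of `p` with the intersection of two facet hyperplanes, which makes the facet through a
  given point of the line unique.
-/

open scoped RealInnerProductSpace
open MeasureTheory

/-- A facet of a `d`-dimensional polytope: a `(d−1)`-dimensional face. -/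
def IsFacetOf {d : ℕ} (P F : Set (EuclideanSpace ℝ (Fin d))) : Prop :=
  IsExtreme ℝ P F ∧ Convex ℝ F ∧ F.Nonempty ∧
    Module.finrank ℝ (affineSpan ℝ F).direction = d - 1

/-! ### Faces and supporting hyperplanes -/

/-- Euclidean `d`-space. -/
abbrev Eu (d : ℕ) := EuclideanSpace ℝ (Fin d)

/-- The face of a polytope cut out by a supporting hyperplane is spanned by the vertices on it. -/
theorem mem_convexHull_face {d : ℕ} (V : Finset (Eu d)) (w : Eu d) (c : ℝ)
    (hle : ∀ v ∈ V, ⟪w, v⟫ ≤ c) {b : Eu d} (hb : b ∈ convexHull ℝ (V : Set (Eu d)))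
    (hbc : ⟪w, b⟫ = c) :
    b ∈ convexHull ℝ {v : Eu d | v ∈ V ∧ ⟪w, v⟫ = c} := by
  classical
  obtain ⟨a, ha0, ha1, hab⟩ := Finset.mem_convexHull'.1 hb
  -- no vertex strictly below the hyperplane can carry weight
  have hsum : ∑ v ∈ V, a v * (c - ⟪w, v⟫) = 0 := by
    have h1 : ∑ v ∈ V, a v * ⟪w, v⟫ = c := by
      rw [← hbc, ← hab, inner_sum]
      simp [inner_smul_right]
    simp only [mul_sub, Finset.sum_sub_distrib, h1, ← Finset.sum_mul, ha1]
    ring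
  have hzero : ∀ v ∈ V, v ∉ V.filter (fun v => ⟪w, v⟫ = c) → a v = 0 := by
    intro v hv hv'
    have h := (Finset.sum_eq_zero_iff_of_nonneg
      (fun v hv => mul_nonneg (ha0 v hv) (sub_nonneg.2 (hle v hv)))).1 hsum v hv
    rcases mul_eq_zero.1 h with h | h
    · exact h
    · exact absurd (Finset.mem_filter.2 ⟨hv, by linarith⟩) hv'
  have hset : {v : Eu d | v ∈ V ∧ ⟪w, v⟫ = c} = (V.filter (fun v => ⟪w, v⟫ = c) : Finset (Eu d)) := by
    ext v; simp
  rw [hset, Finset.mem_convexHull']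
  refine ⟨a, fun v hv => ha0 v (Finset.mem_filter.1 hv).1, ?_, ?_⟩
  · rw [← ha1]
    exact Finset.sum_subset (Finset.filter_subset _ _) hzero
  · rw [← hab]
    exact Finset.sum_subset (Finset.filter_subset _ _) fun v hv hv' => by
      rw [hzero v hv hv', zero_smul]

theorem isExtreme_inter_hyperplane {d : ℕ} {P : Set (Eu d)} {w : Eu d} {c : ℝ}
    (hle : P ⊆ {x | ⟪w, x⟫ ≤ c}) : IsExtreme ℝ P (P ∩ {x | ⟪w, x⟫ = c}) := by
  refine ⟨Set.inter_subset_left, ?_⟩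
  rintro x hx y hy z ⟨-, hz⟩ ⟨α, β, hα, hβ, hαβ, rfl⟩
  refine ⟨hx, ?_⟩
  have h1 : ⟪w, x⟫ ≤ c := hle hx
  have h2 : ⟪w, y⟫ ≤ c := hle hy
  simp only [Set.mem_ofPred_eq, inner_add_right, inner_smul_right] at hz ⊢
  obtain rfl : β = 1 - α := by linarith
  nlinarith

/-- A convex extreme subset `F` of `P` contains every point `x` of `P` on its affine span: going
from `x` through a relative interior point of `F`, one stays in `F` for a while beyond it. -/
theorem IsExtreme.inter_affineSpan_subset {d : ℕ} {P F : Set (Eu d)} (hE : IsExtreme ℝ P F)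
    (hc : Convex ℝ F) (hne : F.Nonempty) {x : Eu d} (hxP : x ∈ P)
    (hx : x ∈ affineSpan ℝ F) : x ∈ F := by
  have := hne.to_subtype
  obtain ⟨y, hy⟩ := Set.Nonempty.intrinsicInterior hc hne
  obtain ⟨y', hy', rfl⟩ := mem_intrinsicInterior.1 hy
  have hcont : Continuous fun ε : ℝ => AffineMap.lineMap y' (⟨x, hx⟩ : affineSpan ℝ F) (-ε) := by
    refine Continuous.comp ?_ continuous_neg
    exact AffineMap.lineMap_continuous
  have hev : ∀ᶠ ε in nhdsWithin (0 : ℝ) (Set.Ioi 0),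
      AffineMap.lineMap y' (⟨x, hx⟩ : affineSpan ℝ F) (-ε) ∈
        ((↑) ⁻¹' F : Set (affineSpan ℝ F)) := by
    refine Filter.Eventually.filter_mono nhdsWithin_le_nhds ?_
    refine hcont.continuousAt.eventually ?_
    simp only [neg_zero, AffineMap.lineMap_apply_zero]
    exact mem_interior_iff_mem_nhds.1 hy'
  obtain ⟨ε, hεF, hε⟩ := (hev.and self_mem_nhdsWithin).exists
  have hε : 0 < ε := hε
  have hz : (y' : Eu d) + (-ε) • (x - y') ∈ F := by
    have := hεF
    simpa [AffineMap.lineMap_apply, add_comm] using this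
  have hyF : (y' : Eu d) ∈ F := intrinsicInterior_subset hy
  refine hE.left_mem_of_mem_openSegment hxP (hE.subset hz) hyF ?_
  refine ⟨ε / (1 + ε), 1 / (1 + ε), by positivity, by positivity, by field_simp; ring, ?_⟩
  have h1 : (1 + ε) ≠ 0 := by positivity
  have : (1 + ε) • ((ε / (1 + ε)) • x + (1 / (1 + ε)) • ((y' : Eu d) + (-ε) • (x - y')))
      = (1 + ε) • (y' : Eu d) := by
    rw [smul_add, smul_smul, smul_smul, mul_div_cancel₀ _ h1, mul_div_cancel₀ _ h1]
    module
  exact smul_right_injective _ h1 this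

theorem finrank_hyperplane_lt {d : ℕ} {w : Eu d} (hw : w ≠ 0) :
    Module.finrank ℝ (ℝ ∙ w)ᗮ < d := by
  have h := Submodule.finrank_add_finrank_orthogonal (ℝ ∙ w)
  rw [finrank_span_singleton hw, finrank_euclideanSpace_fin] at h
  omega

theorem direction_le_of_inner_eq {d : ℕ} {S : Set (Eu d)} {w : Eu d} {c : ℝ}
    (h : S ⊆ {x | ⟪w, x⟫ = c}) : (affineSpan ℝ S).direction ≤ (ℝ ∙ w)ᗮ := by
  rw [direction_affineSpan, vectorSpan_def, Submodule.span_le]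
  rintro _ ⟨x, hx, y, hy, rfl⟩
  have h1 : ⟪w, x⟫ = c := h hx
  have h2 : ⟪w, y⟫ = c := h hy
  rw [SetLike.mem_coe, Submodule.mem_orthogonal_singleton_iff_inner_right]
  simp [inner_sub_right, h1, h2]

theorem affineSpan_insert_ne_top {d : ℕ} {S : Set (Eu d)} (p : Eu d)
    (h : Module.finrank ℝ (affineSpan ℝ S).direction + 2 ≤ d) :
    affineSpan ℝ (insert p S) ≠ ⊤ := by
  intro htop
  have h1 : Module.finrank ℝ (vectorSpan ℝ (insert p S)) = d := by
    rw [← direction_affineSpan, htop, AffineSubspace.direction_top, finrank_top,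
      finrank_euclideanSpace_fin]
  rw [direction_affineSpan] at h
  have := finrank_vectorSpan_insert_le_set ℝ S p
  omega

/-- A convex set `K` that avoids the interior of `P` but touches `P` at `b` is separated from `P` by
a hyperplane through `b`. It is used with `K` a point and with `K` a line. -/
theorem exists_supporting {d : ℕ} {P K : Set (Eu d)} (hPc : Convex ℝ P)
    (hfull : (interior P).Nonempty) (hK : Convex ℝ K) (hdisj : Disjoint (interior P) K)
    {b : Eu d} (hbP : b ∈ P) (hbK : b ∈ K) :
    ∃ w : Eu d, w ≠ 0 ∧ P ⊆ {x | ⟪w, x⟫ ≤ ⟪w, b⟫} ∧ K ⊆ {x | ⟪w, b⟫ ≤ ⟪w, x⟫} := by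
  obtain ⟨f, u, hf1, hf2⟩ := geometric_hahn_banach_open hPc.interior isOpen_interior hK hdisj
  obtain ⟨w, rfl⟩ := (InnerProductSpace.toDual ℝ (Eu d)).surjective f
  simp only [InnerProductSpace.toDual_apply_apply] at hf1 hf2
  have hPu : P ⊆ {x | ⟪w, x⟫ ≤ u} := by
    refine subset_closure.trans ?_
    rw [← hPc.closure_interior_eq_closure_of_nonempty_interior hfull]
    refine closure_minimal (fun x hx => (hf1 x hx).le) ?_
    exact isClosed_le (by fun_prop) continuous_const
  have hbu : ⟪w, b⟫ = u := le_antisymm (hPu hbP) (hf2 b hbK)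
  refine ⟨w, ?_, by rwa [hbu], by rw [hbu]; exact hf2⟩
  rintro rfl
  obtain ⟨q, hq⟩ := hfull
  have := hf1 q hq
  simp at this hbu
  linarith

/-- A supporting hyperplane `⟪w, ·⟫ = c` at a point `b` cuts out a facet of `conv V` as soon as some
`x` on the line `pb` lies on no proper affine subspace spanned by `p` and points of `V`: a face of
smaller dimension would span together with `p` such a subspace, and it would contain that line. -/
theorem isFacetOf_of_generic {d : ℕ} {V : Finset (Eu d)} {p x b w : Eu d} {c : ℝ}
    (hw : w ≠ 0) (hle : convexHull ℝ (V : Set (Eu d)) ⊆ {x | ⟪w, x⟫ ≤ c})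
    (hb : b ∈ convexHull ℝ (V : Set (Eu d))) (hbc : ⟪w, b⟫ = c)
    (hx : x ∈ affineSpan ℝ {p, b})
    (hgen : ∀ W : Set (Eu d), W ⊆ V → affineSpan ℝ (insert p W) ≠ ⊤ →
      x ∉ affineSpan ℝ (insert p W)) :
    IsFacetOf (convexHull ℝ (V : Set (Eu d)))
      (convexHull ℝ (V : Set (Eu d)) ∩ {x | ⟪w, x⟫ = c}) := by
  have hconv := convex_convexHull ℝ (V : Set (Eu d))
  refine ⟨isExtreme_inter_hyperplane hle, hconv.inter ?_, ⟨b, hb, hbc⟩, ?_⟩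
  · exact convex_hyperplane (f := fun x => ⟪w, x⟫)
      ⟨fun x y => inner_add_right _ _ _, fun r x => inner_smul_right _ _ _⟩ c
  set W : Set (Eu d) := {v | v ∈ V ∧ ⟪w, v⟫ = c} with hW
  have hGW : convexHull ℝ (V : Set (Eu d)) ∩ {x | ⟪w, x⟫ = c} ⊆ convexHull ℝ W :=
    fun y hy => mem_convexHull_face V w c (fun v hv => hle (subset_convexHull ℝ _ hv)) hy.1 hy.2
  have hWG : W ⊆ convexHull ℝ (V : Set (Eu d)) ∩ {x | ⟪w, x⟫ = c} :=
    fun v hv => ⟨subset_convexHull ℝ _ hv.1, hv.2⟩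
  have hspan : affineSpan ℝ (convexHull ℝ (V : Set (Eu d)) ∩ {x | ⟪w, x⟫ = c})
      = affineSpan ℝ W := by
    refine le_antisymm ?_ (affineSpan_mono ℝ hWG)
    rw [← affineSpan_convexHull W]
    exact affineSpan_mono ℝ hGW
  rw [hspan]
  have hlt : Module.finrank ℝ (affineSpan ℝ W).direction < d :=
    (Submodule.finrank_mono (direction_le_of_inner_eq (c := c) fun v hv => hv.2)).trans_lt
      (finrank_hyperplane_lt hw)
  by_contra hne
  have hne' : Module.finrank ℝ (affineSpan ℝ W).direction ≠ d - 1 := hne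
  refine hgen W (fun v hv => hv.1) (affineSpan_insert_ne_top p (by omega)) ?_
  refine affineSpan_le_of_subset_coe ?_ hx
  have hbW : b ∈ affineSpan ℝ W := convexHull_subset_affineSpan W (hGW ⟨hb, hbc⟩)
  rintro y (rfl | rfl)
  · exact mem_affineSpan ℝ (Set.mem_insert _ _)
  · exact affineSpan_mono ℝ (Set.subset_insert _ _) hbW

/-- A `(d-1)`-dimensional set inside a hyperplane spans the whole hyperplane. -/
theorem mem_affineSpan_of_inner_eq {d : ℕ} {F : Set (Eu d)} {w : Eu d} {c : ℝ} (hw : w ≠ 0)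
    (hF : F ⊆ {x | ⟪w, x⟫ = c}) (hne : F.Nonempty)
    (hdim : Module.finrank ℝ (affineSpan ℝ F).direction = d - 1) {x : Eu d} (hx : ⟪w, x⟫ = c) :
    x ∈ affineSpan ℝ F := by
  have hdir : (affineSpan ℝ F).direction = (ℝ ∙ w)ᗮ :=
    Submodule.eq_of_le_of_finrank_le (direction_le_of_inner_eq hF) (by
      have := finrank_hyperplane_lt hw; omega)
  obtain ⟨y, hy⟩ := hne
  have hyc : ⟪w, y⟫ = c := hF hy
  have : x -ᵥ y ∈ (affineSpan ℝ F).direction := by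
    rw [hdir, Submodule.mem_orthogonal_singleton_iff_inner_right]
    simp [inner_sub_right, hx, hyc]
  exact (AffineSubspace.vsub_right_mem_direction_iff_mem (mem_affineSpan ℝ hy) x).1 this

/-! ### The identity at a generic point -/

theorem mem_convexHull_union_singleton_iff {d : ℕ} {F : Set (Eu d)} (hc : Convex ℝ F)
    (hne : F.Nonempty) {p x : Eu d} (hxp : x ≠ p) :
    x ∈ convexHull ℝ (F ∪ {p}) ↔ ∃ t : ℝ, 1 ≤ t ∧ p + t • (x - p) ∈ F := by
  rw [Set.union_singleton, convexHull_insert hne, hc.convexHull_eq, convexJoin_singleton_left]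
  simp only [Set.mem_iUnion, exists_prop, segment_eq_image', Set.mem_image, Set.mem_Icc]
  constructor
  · rintro ⟨y, hy, s, ⟨hs0, hs1⟩, rfl⟩
    have hs : s ≠ 0 := by
      rintro rfl
      simp at hxp
    refine ⟨s⁻¹, (one_le_inv₀ (lt_of_le_of_ne hs0 hs.symm)).2 hs1, ?_⟩
    rwa [add_sub_cancel_left, smul_smul, inv_mul_cancel₀ hs, one_smul, add_sub_cancel]
  · rintro ⟨t, ht, hF⟩
    have ht0 : 0 < t := by linarith
    refine ⟨_, hF, t⁻¹, ⟨by positivity, inv_le_one_of_one_le₀ ht⟩, ?_⟩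
    rw [add_sub_cancel_left, smul_smul, inv_mul_cancel₀ ht0.ne', one_smul, add_sub_cancel]

open Classical in
/-- The signed sum of the indicators of the pyramids is the indicator of `P` at every point `x`
outside finitely many proper affine subspaces: `p` itself, the facet hyperplanes, the proper spans
of `p` with vertices, and the proper spans of `p` with the intersection of two facet hyperplanes. -/
theorem indicator_eq_signed_sum {d : ℕ} (V : Finset (Eu d)) (P : Set (Eu d))
    (hP : P = convexHull ℝ (V : Set (Eu d))) (hfull : (interior P).Nonempty)
    (p : Eu d) (hp : p ∉ P) (n : ℕ) (F : Fin n → Set (Eu d)) (hFinj : Function.Injective F)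
    (hF : ∀ i, IsFacetOf P (F i)) (hFall : ∀ G, IsFacetOf P G → ∃ i, G = F i)
    (w : Fin n → Eu d) (c : Fin n → ℝ)
    (hspan : ∀ i, (affineSpan ℝ (F i) : Set (Eu d)) = {x | ⟪w i, x⟫ = c i})
    (hside : ∀ i, P ⊆ {x | ⟪w i, x⟫ ≤ c i})
    (x : Eu d) (hxp : x ≠ p) (hxH : ∀ i, x ∉ affineSpan ℝ (F i))
    (hgenV : ∀ W : Set (Eu d), W ⊆ V → affineSpan ℝ (insert p W) ≠ ⊤ →
      x ∉ affineSpan ℝ (insert p W))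
    (hgenF : ∀ i j, affineSpan ℝ (insert p
        ((affineSpan ℝ (F i) ⊓ affineSpan ℝ (F j) : AffineSubspace ℝ (Eu d)) : Set (Eu d))) ≠ ⊤ →
      x ∉ affineSpan ℝ (insert p
        ((affineSpan ℝ (F i) ⊓ affineSpan ℝ (F j) : AffineSubspace ℝ (Eu d)) : Set (Eu d)))) :
    P.indicator (fun _ => (1 : ℝ)) x =
      ∑ i, (if ⟪w i, p⟫ ≤ c i then (1 : ℝ) else -1) *
        (convexHull ℝ (F i ∪ {p})).indicator (fun _ => (1 : ℝ)) x := by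
  have hPconv : Convex ℝ P := hP ▸ convex_convexHull ℝ _
  have hPcomp : IsCompact P := hP ▸ V.finite_toSet.isCompact_convexHull ℝ
  have hmem : ∀ i y, y ∈ affineSpan ℝ (F i) ↔ ⟪w i, y⟫ = c i := fun i y => by
    rw [← SetLike.mem_coe, hspan]; rfl
  have hxH' : ∀ i, ⟪w i, x⟫ ≠ c i := fun i h => hxH i ((hmem i x).2 h)
  have hFc : ∀ i y, y ∈ F i → ⟪w i, y⟫ = c i := fun i y hy => (hmem i y).1 (mem_affineSpan ℝ hy)
  have hFP : ∀ i, F i ⊆ P := fun i => (hF i).1.subset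
  have hFeq : ∀ i y, y ∈ P → ⟪w i, y⟫ = c i → y ∈ F i := fun i y hy hyc =>
    (hF i).1.inter_affineSpan_subset (hF i).2.1 (hF i).2.2.1 hy ((hmem i y).2 hyc)
  -- if `w i = 0`, the solution set of `⟪w i, ·⟫ = c i` is everything and contains `x`
  have hw : ∀ i, w i ≠ 0 := by
    intro i h0
    obtain ⟨y, hy⟩ := (hF i).2.2.1
    have h1 := hFc i y hy
    apply hxH' i
    rw [← h1, h0, inner_zero_left, inner_zero_left]
  have hinner : ∀ (u : Eu d) (t : ℝ), ⟪u, p + t • (x - p)⟫ = ⟪u, p⟫ + t * ⟪u, x - p⟫ := by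
    intro u t
    rw [inner_add_right, inner_smul_right]
  have hinner1 : ∀ u : Eu d, ⟪u, x⟫ = ⟪u, p⟫ + ⟪u, x - p⟫ := by
    intro u
    rw [inner_sub_right]; ring
  -- a line through `x` that hits a facet is transversal to its hyperplane
  have hslope : ∀ i, ∀ t : ℝ, ⟪w i, p + t • (x - p)⟫ = c i → ⟪w i, x - p⟫ ≠ 0 := by
    intro i t h h0
    rw [hinner, h0] at h
    apply hxH' i
    rw [hinner1, h0]
    linarith
  have hxline : ∀ t : ℝ, t ≠ 0 → x ∈ affineSpan ℝ {p, p + t • (x - p)} := by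
    intro t ht
    have h : AffineMap.lineMap p (p + t • (x - p)) t⁻¹ = x := by
      rw [AffineMap.lineMap_apply_module', add_sub_cancel_left, smul_smul, inv_mul_cancel₀ ht]
      simp
    have hmem_line := AffineMap.lineMap_mem_affineSpan_pair t⁻¹ p (p + t • (x - p))
    rwa [h] at hmem_line
  -- distinct facets meet in codimension two, so they do not meet at a point of the line
  have huniq : ∀ i j, ∀ t : ℝ, t ≠ 0 → p + t • (x - p) ∈ F i → p + t • (x - p) ∈ F j → i = j := by
    intro i j t ht hi hj
    by_contra hij
    set A : AffineSubspace ℝ (Eu d) := affineSpan ℝ (F i) ⊓ affineSpan ℝ (F j) with hA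
    have hbA : p + t • (x - p) ∈ A := ⟨mem_affineSpan ℝ hi, mem_affineSpan ℝ hj⟩
    have hlt : A < affineSpan ℝ (F i) := by
      refine lt_of_le_of_ne inf_le_left fun h => hij (hFinj ?_)
      have hle : affineSpan ℝ (F i) ≤ affineSpan ℝ (F j) := h ▸ inf_le_right
      have hij' : F i ⊆ {y | ⟪w j, y⟫ = c j} := fun y hy =>
        (hmem j y).1 (hle (mem_affineSpan ℝ hy))
      refine Set.Subset.antisymm (fun y hy => hFeq j y (hFP i hy) (hij' hy)) fun y hy => ?_
      exact hFeq i y (hFP j hy) ((hmem i y).1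
        (mem_affineSpan_of_inner_eq (hw j) hij' ⟨_, hi⟩ (hF i).2.2.2 (hFc j y hy)))
    have hdir := Submodule.finrank_lt_finrank_of_lt
      (AffineSubspace.direction_lt_of_nonempty hlt ⟨_, hbA⟩)
    rw [(hF i).2.2.2] at hdir
    refine hgenF i j (affineSpan_insert_ne_top p ?_) ?_
    · rw [AffineSubspace.affineSpan_coe]
      exact (by omega : Module.finrank ℝ A.direction + 2 ≤ d)
    · refine affineSpan_le_of_subset_coe ?_ (hxline t ht)
      rintro y (rfl | rfl)
      · exact mem_affineSpan ℝ (Set.mem_insert _ _)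
      · exact mem_affineSpan ℝ (Set.mem_insert_of_mem _ hbA)
  -- a supporting hyperplane touching the line cuts out a facet
  have hfacet : ∀ t : ℝ, t ≠ 0 → p + t • (x - p) ∈ P → ∀ u : Eu d, u ≠ 0 →
      P ⊆ {y | ⟪u, y⟫ ≤ ⟪u, p + t • (x - p)⟫} →
      ∃ i, F i = P ∩ {y | ⟪u, y⟫ = ⟪u, p + t • (x - p)⟫} := by
    intro t ht hbP u hu hle
    subst hP
    obtain ⟨i, hi⟩ := hFall _ (isFacetOf_of_generic hu hle hbP rfl (hxline t ht) hgenV)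
    exact ⟨i, hi.symm⟩
  have hfrontier : ∀ t : ℝ, t ≠ 0 → p + t • (x - p) ∈ P → p + t • (x - p) ∉ interior P →
      ∃ i, p + t • (x - p) ∈ F i := by
    intro t ht hbP hbI
    obtain ⟨u, hu, hle, -⟩ := exists_supporting hPconv hfull (convex_singleton _)
      (Set.disjoint_singleton_right.2 hbI) hbP rfl
    obtain ⟨i, hi⟩ := hfacet t ht hbP u hu hle
    exact ⟨i, hi ▸ ⟨hbP, rfl⟩⟩
  -- the line meets the interior as soon as it meets `P`
  have hinterior : ∀ t : ℝ, t ≠ 0 → p + t • (x - p) ∈ P →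
      ∃ s : ℝ, p + s • (x - p) ∈ interior P := by
    intro t ht hbP
    by_contra! hno
    have hdisj : Disjoint (interior P) (affineSpan ℝ {p, x} : Set (Eu d)) := by
      rw [Set.disjoint_right]
      intro y hy
      obtain ⟨s, rfl⟩ := mem_affineSpan_pair_iff_exists_lineMap_eq.1 hy
      rw [AffineMap.lineMap_apply_module', add_comm]
      exact hno s
    have hline : ∀ s : ℝ, p + s • (x - p) ∈ affineSpan ℝ {p, x} := by
      intro s
      rw [add_comm, ← AffineMap.lineMap_apply_module']
      exact AffineMap.lineMap_mem_affineSpan_pair s p x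
    obtain ⟨u, hu, hle, hge⟩ := exists_supporting hPconv hfull (AffineSubspace.convex _)
      hdisj hbP (hline t)
    -- `u` is minimal at time `t` along the whole line, hence constant on it
    have h1 : ⟪u, p + t • (x - p)⟫ ≤ ⟪u, p + (t + 1) • (x - p)⟫ := hge (hline _)
    have h2 : ⟪u, p + t • (x - p)⟫ ≤ ⟪u, p + (t - 1) • (x - p)⟫ := hge (hline _)
    rw [hinner, hinner] at h1 h2
    have h0 : ⟪u, x - p⟫ = 0 := by linarith
    obtain ⟨i, hi⟩ := hfacet t ht hbP u hu hle
    refine hxH i (mem_affineSpan_of_inner_eq hu (c := ⟪u, p + t • (x - p)⟫) ?_ (hF i).2.2.1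
      (hF i).2.2.2 ?_)
    · rw [hi]; exact Set.inter_subset_right
    · rw [hinner, hinner1, h0]; simp
  have hpyr : ∀ i, x ∈ convexHull ℝ (F i ∪ {p}) ↔ ∃ t : ℝ, 1 ≤ t ∧ p + t • (x - p) ∈ F i :=
    fun i => mem_convexHull_union_singleton_iff (hF i).2.1 (hF i).2.2.1 hxp
  have hxP : x ∈ P ↔ p + (1 : ℝ) • (x - p) ∈ P := by simp
  by_cases hS : ∃ t : ℝ, 0 < t ∧ p + t • (x - p) ∈ P
  swap
  · push Not at hS
    rw [Set.indicator_of_notMem (by rw [hxP]; exact hS 1 one_pos)]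
    refine (Finset.sum_eq_zero fun i _ => ?_).symm
    rw [Set.indicator_of_notMem, mul_zero]
    rw [hpyr]
    rintro ⟨t, ht, hti⟩
    exact hS t (by linarith) (hFP i hti)
  obtain ⟨τ, hτ0, hτ⟩ := hS
  have hcont : Continuous fun t : ℝ => p + t • (x - p) := by fun_prop
  set S : Set ℝ := (fun t : ℝ => p + t • (x - p)) ⁻¹' P with hSdef
  have hScomp : IsCompact S :=
    ((Homeomorph.addLeft p).isClosedEmbedding.comp
      (isClosedEmbedding_smul_left (𝕜 := ℝ) (sub_ne_zero.2 hxp))).isCompact_preimage hPcomp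
  have hSconv : S.OrdConnected := by
    have : Convex ℝ S := by
      have h : (fun t : ℝ => p + t • (x - p)) = (AffineMap.lineMap p x : ℝ →ᵃ[ℝ] Eu d) := by
        funext t
        rw [AffineMap.lineMap_apply_module', add_comm]
      rw [hSdef, h]
      exact hPconv.affine_preimage _
    exact this.ordConnected
  -- a nonpositive time would put time `0`, that is `p`, between two times spent in `P`
  have hSpos : ∀ s ∈ S, 0 < s := by
    intro s hs
    by_contra! h
    have h0 : (0 : ℝ) ∈ S := hSconv.out hs hτ ⟨h, hτ0.le⟩
    apply hp
    simpa [hSdef] using h0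
  obtain ⟨t₀, ht₀⟩ := hScomp.exists_isLeast ⟨τ, hτ⟩
  obtain ⟨t₁, ht₁⟩ := hScomp.exists_isGreatest ⟨τ, hτ⟩
  have hpos₀ : 0 < t₀ := hSpos _ ht₀.1
  have hpos₁ : 0 < t₁ := hSpos _ ht₁.1
  have hSiff : ∀ t, p + t • (x - p) ∈ P ↔ t₀ ≤ t ∧ t ≤ t₁ := fun t =>
    ⟨fun h => ⟨ht₀.2 h, ht₁.2 h⟩, fun h => hSconv.out ht₀.1 ht₁.1 h⟩
  have hev : ∀ t, p + t • (x - p) ∈ interior P → ∀ᶠ s in nhds t, t₀ ≤ s ∧ s ≤ t₁ := by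
    intro t ht
    have := hcont.continuousAt.eventually (mem_interior_iff_mem_nhds.1 ht)
    filter_upwards [this] with s hs
    exact (hSiff s).1 hs
  have hlt : ∀ t, p + t • (x - p) ∈ interior P → t₀ < t ∧ t < t₁ := by
    intro t ht
    constructor
    · obtain ⟨s, hs, hst⟩ := (((hev t ht).filter_mono nhdsWithin_le_nhds).and
        (self_mem_nhdsWithin (s := Set.Iio t))).exists
      exact hs.1.trans_lt hst
    · obtain ⟨s, hs, hst⟩ := (((hev t ht).filter_mono nhdsWithin_le_nhds).and
        (self_mem_nhdsWithin (s := Set.Ioi t))).exists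
      exact lt_of_lt_of_le hst hs.2
  obtain ⟨σ, hσ⟩ := hinterior τ hτ0.ne' hτ
  have h01 : t₀ < t₁ := (hlt σ hσ).1.trans (hlt σ hσ).2
  obtain ⟨i₀, hi₀⟩ := hfrontier t₀ hpos₀.ne' ht₀.1 fun h => (hlt _ h).1.false
  obtain ⟨i₁, hi₁⟩ := hfrontier t₁ hpos₁.ne' ht₁.1 fun h => (hlt _ h).2.false
  have hle₀ : ∀ i, ⟪w i, p⟫ + t₀ * ⟪w i, x - p⟫ ≤ c i := fun i => by
    rw [← hinner]; exact hside i ht₀.1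
  have hle₁ : ∀ i, ⟪w i, p⟫ + t₁ * ⟪w i, x - p⟫ ≤ c i := fun i => by
    rw [← hinner]; exact hside i ht₁.1
  have hsgn₀ : c i₀ < ⟪w i₀, p⟫ := by
    have h := hFc i₀ _ hi₀
    have hm := hslope i₀ t₀ h
    have h' := hle₁ i₀
    rw [hinner] at h
    have : ⟪w i₀, x - p⟫ < 0 := lt_of_le_of_ne (by nlinarith) hm
    nlinarith
  have hsgn₁ : ⟪w i₁, p⟫ ≤ c i₁ := by
    have h := hFc i₁ _ hi₁
    have h' := hle₀ i₁
    rw [hinner] at h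
    have : 0 ≤ ⟪w i₁, x - p⟫ := by nlinarith
    nlinarith
  have hne : i₀ ≠ i₁ := by
    rintro rfl
    linarith
  -- along the line `⟪w i, ·⟫` is at most `c i` on `[t₀, t₁]` and not constant, so it can attain
  -- `c i` only at `t₀` (if decreasing) or at `t₁` (if increasing)
  have hhit : ∀ i t, p + t • (x - p) ∈ F i ↔ (t = t₀ ∧ i = i₀) ∨ (t = t₁ ∧ i = i₁) := by
    intro i t
    constructor
    · intro h
      have hc := hFc i _ h
      have hm := hslope i t hc
      obtain ⟨ht0, ht1⟩ := (hSiff t).1 (hFP i h)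
      have e0 := hle₀ i
      have e1 := hle₁ i
      rw [hinner] at hc
      rcases lt_or_gt_of_ne hm with hm | hm
      · obtain rfl : t = t₀ := le_antisymm (by nlinarith) ht0
        exact Or.inl ⟨rfl, huniq _ _ t hpos₀.ne' h hi₀⟩
      · obtain rfl : t = t₁ := le_antisymm ht1 (by nlinarith)
        exact Or.inr ⟨rfl, huniq _ _ t hpos₁.ne' h hi₁⟩
    · rintro (⟨rfl, rfl⟩ | ⟨rfl, rfl⟩) <;> assumption
  have hind : ∀ i, x ∈ convexHull ℝ (F i ∪ {p}) ↔ (1 ≤ t₀ ∧ i = i₀) ∨ (1 ≤ t₁ ∧ i = i₁) := by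
    intro i
    simp only [hpyr, hhit]
    constructor
    · rintro ⟨t, ht, (⟨rfl, hi⟩ | ⟨rfl, hi⟩)⟩
      · exact Or.inl ⟨ht, hi⟩
      · exact Or.inr ⟨ht, hi⟩
    · rintro (⟨ht, hi⟩ | ⟨ht, hi⟩)
      · exact ⟨t₀, ht, Or.inl ⟨rfl, hi⟩⟩
      · exact ⟨t₁, ht, Or.inr ⟨rfl, hi⟩⟩
  have hterm : ∀ i, (if ⟪w i, p⟫ ≤ c i then (1 : ℝ) else -1) *
        (convexHull ℝ (F i ∪ {p})).indicator (fun _ => (1 : ℝ)) x =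
      (if i = i₁ then (if 1 ≤ t₁ then 1 else 0) else 0) -
        (if i = i₀ then (if 1 ≤ t₀ then 1 else 0) else 0) := by
    intro i
    rw [Set.indicator_apply, if_congr (hind i) rfl rfl]
    by_cases h0 : i = i₀
    · subst h0
      by_cases h : 1 ≤ t₀ <;> simp [hne, not_le.2 hsgn₀, h]
    · by_cases h1 : i = i₁
      · subst h1
        simp [h0, hsgn₁]
      · simp [h0, h1]
  have h1ne : t₀ ≠ 1 := by
    rintro rfl
    apply hxH i₀
    have := mem_affineSpan ℝ hi₀
    simpa using this
  rw [Finset.sum_congr rfl fun i _ => hterm i, Finset.sum_sub_distrib, Finset.sum_ite_eq',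
    Finset.sum_ite_eq', Set.indicator_apply, if_congr (hxP.trans (hSiff 1)) rfl rfl]
  simp only [Finset.mem_univ, if_true]
  by_cases hA : 1 ≤ t₀
  · have hB : 1 ≤ t₁ := by linarith
    have hC : ¬ t₀ ≤ 1 := fun h => h1ne (le_antisymm h hA)
    simp [hA, hB, hC]
  · have hC : t₀ ≤ 1 := by linarith
    simp [hA, hC]

/-! ### Integration -/

open Classical in
/-- The volume of a full-dimensional polytope `P` is the signed sum of the volumes of the
pyramids `conv(F ∪ {p})` over all facets `F`, where the sign is `+1` if `p` lies in the
closed halfspace bounded by the affine span of `F` containing `P`, and `−1` otherwise. -/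
theorem vol_eq_signed_sum_pyramids {d : ℕ} (V : Finset (EuclideanSpace ℝ (Fin d)))
    (P : Set (EuclideanSpace ℝ (Fin d)))
    (hP : P = convexHull ℝ (V : Set (EuclideanSpace ℝ (Fin d))))
    (hfull : (interior P).Nonempty)
    (p : EuclideanSpace ℝ (Fin d)) (hp : p ∉ P)
    -- the facets of `P`, listed without repetition
    (n : ℕ) (F : Fin n → Set (EuclideanSpace ℝ (Fin d))) (hFinj : Function.Injective F)
    (hF : ∀ i, IsFacetOf P (F i)) (hFall : ∀ G, IsFacetOf P G → ∃ i, G = F i)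
    -- for each facet, the hyperplane data of its affine span, with `P` on the `≤` side
    (w : Fin n → EuclideanSpace ℝ (Fin d)) (c : Fin n → ℝ)
    (hspan : ∀ i, (affineSpan ℝ (F i) : Set (EuclideanSpace ℝ (Fin d)))
      = {x | ⟪w i, x⟫ = c i})
    (hside : ∀ i, P ⊆ {x | ⟪w i, x⟫ ≤ c i}) :
    (volume P).toReal =
      ∑ i, (if ⟪w i, p⟫ ≤ c i then (1 : ℝ) else -1) *
        (volume (convexHull ℝ (F i ∪ {p}))).toReal := by
  -- in dimension zero `P` is the whole space, which `p ∉ P` excludes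
  have hd : 1 ≤ d := by
    by_contra! h
    obtain rfl : d = 0 := by omega
    obtain ⟨q, hq⟩ := hfull
    exact hp (Subsingleton.elim q p ▸ interior_subset hq)
  have hPbdd : Bornology.IsBounded P := hP ▸ isBounded_convexHull.2 V.finite_toSet.isBounded
  have hint : ∀ {A : Set (Eu d)}, Convex ℝ A → Bornology.IsBounded A →
      Integrable (A.indicator fun _ => (1 : ℝ)) ∧
        ∫ x, A.indicator (fun _ => (1 : ℝ)) x = (volume A).toReal := by
    intro A hA hbdd
    have hmeas : NullMeasurableSet A := hA.nullMeasurableSet volume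
    refine ⟨IntegrableOn.integrable_indicator₀ (integrableOn_const hbdd.measure_lt_top.ne) hmeas,
      ?_⟩
    rw [integral_indicator₀ hmeas]
    simp [measureReal_def]
  have hpyr : ∀ i, Convex ℝ (convexHull ℝ (F i ∪ {p})) ∧
      Bornology.IsBounded (convexHull ℝ (F i ∪ {p})) := fun i =>
    ⟨convex_convexHull ℝ _, isBounded_convexHull.2
      ((hPbdd.subset (hF i).1.subset).union Bornology.isBounded_singleton)⟩
  have hae : ∀ {A : AffineSubspace ℝ (Eu d)}, A ≠ ⊤ → ∀ᵐ x : Eu d, x ∉ A := fun {A} hA =>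
    measure_eq_zero_iff_ae_notMem.1 (Measure.addHaar_affineSubspace volume A hA)
  have hae1 : ∀ᵐ x : Eu d, x ≠ p := by
    have h : affineSpan ℝ {p} ≠ ⊤ := by
      intro h
      obtain ⟨q, hq⟩ := hfull
      have hq' : q ∈ affineSpan ℝ {p} := h ▸ AffineSubspace.mem_top ℝ _ q
      rw [AffineSubspace.mem_affineSpan_singleton] at hq'
      exact hp (hq' ▸ interior_subset hq)
    filter_upwards [hae h] with x hx
    rwa [AffineSubspace.mem_affineSpan_singleton] at hx
  have hae2 : ∀ᵐ x : Eu d, ∀ i, x ∉ affineSpan ℝ (F i) := by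
    refine ae_all_iff.2 fun i => hae fun h => ?_
    have h1 := (hF i).2.2.2
    rw [h, AffineSubspace.direction_top, finrank_top, finrank_euclideanSpace_fin] at h1
    omega
  have hae3 : ∀ᵐ x : Eu d, ∀ W : Set (Eu d), W ⊆ V → affineSpan ℝ (insert p W) ≠ ⊤ →
      x ∉ affineSpan ℝ (insert p W) := by
    refine (ae_ball_iff V.finite_toSet.finite_subsets.countable).2 fun W _ => ?_
    by_cases h : affineSpan ℝ (insert p W) = ⊤
    · exact Filter.Eventually.of_forall fun x h' => absurd h h'
    · filter_upwards [hae h] with x hx _ using hx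
  have hae4 : ∀ᵐ x : Eu d, ∀ i j, affineSpan ℝ (insert p
        ((affineSpan ℝ (F i) ⊓ affineSpan ℝ (F j) : AffineSubspace ℝ (Eu d)) : Set (Eu d))) ≠ ⊤ →
      x ∉ affineSpan ℝ (insert p
        ((affineSpan ℝ (F i) ⊓ affineSpan ℝ (F j) : AffineSubspace ℝ (Eu d)) : Set (Eu d))) := by
    refine ae_all_iff.2 fun i => ae_all_iff.2 fun j => ?_
    by_cases h : affineSpan ℝ (insert p
        ((affineSpan ℝ (F i) ⊓ affineSpan ℝ (F j) : AffineSubspace ℝ (Eu d)) : Set (Eu d))) = ⊤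
    · exact Filter.Eventually.of_forall fun x h' => absurd h h'
    · filter_upwards [hae h] with x hx _ using hx
  have hkey : (fun x => P.indicator (fun _ => (1 : ℝ)) x) =ᵐ[volume] fun x =>
      ∑ i, (if ⟪w i, p⟫ ≤ c i then (1 : ℝ) else -1) *
        (convexHull ℝ (F i ∪ {p})).indicator (fun _ => (1 : ℝ)) x := by
    filter_upwards [hae1, hae2, hae3, hae4] with x h1 h2 h3 h4
    exact indicator_eq_signed_sum V P hP hfull p hp n F hFinj hF hFall w c hspan hside x h1 h2 h3 h4
  have hPconv : Convex ℝ P := hP ▸ convex_convexHull ℝ _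
  rw [← (hint hPconv hPbdd).2, integral_congr_ae hkey, integral_finsetSum _ fun i _ =>
    ((hint (hpyr i).1 (hpyr i).2).1.const_mul _)]
  refine Finset.sum_congr rfl fun i _ => ?_
  rw [integral_const_mul, (hint (hpyr i).1 (hpyr i).2).2]
end

section
/- Let P ⊂ ℝ^d be a full-dimensional polytope, p ∉ P, and let P̂ = conv(P ∪ {p}). Let ℱ⁺ be the set of facets F of P such that the closed halfspace determined by F containing P also contains p. Then P̂ = ⋃_{F ∈ ℱ⁺} conv(F ∪ {p}). -/
/-!
A point `x` of `conv(P ∪ {p})` lies on a segment from `p` to some `q ∈ P`. Follow the ray from `p`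
through `q` to the last point `y` of `P`. Just beyond `y` some facet inequality `⟪w, ·⟫ ≤ c` becomes
violated, so `y` lies on that facet and `⟪w, ·⟫` increases from `p` to `y`; hence `⟪w, p⟫ < c` and
`x ∈ [p, y]` lies in the pyramid over a facet of `ℱ⁺`.

The ingredient is that a full-dimensional polytope is cut out by its facet inequalities
(`exists_facet_violated`). This is proved by polar duality: translate an interior point `o` of `P`
to the origin. The polar body is compact, so a point `z ∉ P` is separated from `P` by an *extreme*
point `w` of the polar body (`exists_extreme_polar`). Extremality forces the vertices `v` with
`⟪w, v - o⟫ = 1` to span the whole space linearly (`span_tight_eq_top`), and therefore to span the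
hyperplane `⟪w, · - o⟫ = 1` affinely (`affineSpan_face_eq`), so this hyperplane cuts out a facet.
-/

open scoped RealInnerProductSpace

/-! ### The polar body and its extreme points -/

/-- The polar body of `conv V` with respect to the centre `o`. -/
def polarAt {d : ℕ} (V : Finset (EuclideanSpace ℝ (Fin d))) (o : EuclideanSpace ℝ (Fin d)) :
    Set (EuclideanSpace ℝ (Fin d)) :=
  {w | ∀ v ∈ V, ⟪w, v - o⟫ ≤ 1}

lemma polarAt_le {d : ℕ} {V : Finset (EuclideanSpace ℝ (Fin d))}
    {o w x : EuclideanSpace ℝ (Fin d)} (hw : w ∈ polarAt V o)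
    (hx : x ∈ convexHull ℝ (V : Set (EuclideanSpace ℝ (Fin d)))) : ⟪w, x - o⟫ ≤ 1 := by
  have hconv : Convex ℝ {x : EuclideanSpace ℝ (Fin d) | ⟪w, x⟫ ≤ 1 + ⟪w, o⟫} :=
    convex_halfSpace_le (innerₛₗ ℝ w).isLinear _
  have hV : (V : Set (EuclideanSpace ℝ (Fin d))) ⊆ {x | ⟪w, x⟫ ≤ 1 + ⟪w, o⟫} := by
    intro v hv
    have := hw v hv
    rw [inner_sub_right] at this
    change ⟪w, v⟫ ≤ _
    linarith
  have : ⟪w, x⟫ ≤ 1 + ⟪w, o⟫ := convexHull_min hV hconv hx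
  rw [inner_sub_right]
  linarith

lemma isCompact_polarAt {d : ℕ} {V : Finset (EuclideanSpace ℝ (Fin d))}
    {o : EuclideanSpace ℝ (Fin d)}
    (ho : o ∈ interior (convexHull ℝ (V : Set (EuclideanSpace ℝ (Fin d))))) :
    IsCompact (polarAt V o) := by
  obtain ⟨r, hr, hball⟩ := Metric.nhds_basis_closedBall.mem_iff.1 (mem_interior_iff_mem_nhds.1 ho)
  apply Metric.isCompact_of_isClosed_isBounded
  · have : polarAt V o = ⋂ v ∈ V, {w | ⟪w, v - o⟫ ≤ 1} := by
      ext w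
      simp [polarAt]
    rw [this]
    refine isClosed_biInter fun v _ => isClosed_le (by fun_prop) continuous_const
  · refine (Metric.isBounded_closedBall (x := (0 : EuclideanSpace ℝ (Fin d)))
      (r := 1 / r)).subset fun w hw => ?_
    rw [mem_closedBall_zero_iff]
    by_cases h0 : w = 0
    · simp [h0, hr.le]
    have hn : 0 < ‖w‖ := norm_pos_iff.2 h0
    have hx : o + (r / ‖w‖) • w ∈ Metric.closedBall o r := by
      rw [Metric.mem_closedBall, dist_eq_norm, add_sub_cancel_left, norm_smul, Real.norm_eq_abs,
        abs_of_pos (by positivity)]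
      field_simp
      rfl
    have h1 := polarAt_le hw (hball hx)
    rw [add_sub_cancel_left, inner_smul_right, real_inner_self_eq_norm_sq] at h1
    rw [le_div_iff₀ hr]
    calc ‖w‖ * r = r / ‖w‖ * ‖w‖ ^ 2 := by field_simp
      _ ≤ 1 := h1

lemma exists_extreme_polar {d : ℕ} {V : Finset (EuclideanSpace ℝ (Fin d))}
    {o z : EuclideanSpace ℝ (Fin d)}
    (ho : o ∈ interior (convexHull ℝ (V : Set (EuclideanSpace ℝ (Fin d)))))
    (hz : z ∉ convexHull ℝ (V : Set (EuclideanSpace ℝ (Fin d)))) :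
    ∃ w ∈ (polarAt V o).extremePoints ℝ, 1 < ⟪w, z - o⟫ := by
  -- Separation, with the separating functional normalised to lie in the polar body.
  obtain ⟨w₀, hw₀, hw₀z⟩ : ∃ w₀ ∈ polarAt V o, 1 < ⟪w₀, z - o⟫ := by
    obtain ⟨f, u, hf, hfz⟩ := geometric_hahn_banach_closed_point
      (convex_convexHull ℝ (V : Set (EuclideanSpace ℝ (Fin d))))
      (V.finite_toSet.isClosed_convexHull ℝ) hz
    have hpos : 0 < u - f o := sub_pos.2 (hf o (interior_subset ho))
    have key : ∀ x, ⟪(u - f o)⁻¹ • (InnerProductSpace.toDual ℝ _).symm f, x - o⟫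
        = (f x - f o) / (u - f o) := by
      intro x
      rw [real_inner_smul_left, InnerProductSpace.toDual_symm_apply, map_sub]
      field_simp
    refine ⟨(u - f o)⁻¹ • (InnerProductSpace.toDual ℝ _).symm f, fun v hv => ?_, ?_⟩
    · rw [key, div_le_one hpos]
      linarith [hf v (subset_convexHull ℝ _ hv)]
    · rw [key, one_lt_div hpos]
      linarith
  -- The maximisers of `⟪·, z - o⟫` form a compact exposed face, which has an extreme point.
  let l : StrongDual ℝ (EuclideanSpace ℝ (Fin d)) := innerSL ℝ (z - o)
  have hexp : IsExposed ℝ (polarAt V o) (l.toExposed (polarAt V o)) :=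
    ContinuousLinearMap.toExposed.isExposed
  have hcomp := isCompact_polarAt ho
  obtain ⟨m, hm, hmax⟩ := hcomp.exists_isMaxOn ⟨w₀, hw₀⟩ l.continuous.continuousOn
  obtain ⟨w, hw⟩ := (hexp.isCompact hcomp).extremePoints_nonempty ⟨m, hm, fun y hy => hmax hy⟩
  refine ⟨w, hexp.isExtreme.extremePoints_subset_extremePoints hw, ?_⟩
  have h1 : l w₀ ≤ l w := (extremePoints_subset hw).2 w₀ hw₀
  simp only [l, innerSL_apply_apply] at h1
  rw [real_inner_comm] at hw₀z ⊢
  linarith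

/-- If the tight vectors failed to span, `w` could be moved both ways along a direction orthogonal
to all of them without leaving the polar body. -/
lemma span_tight_eq_top {d : ℕ} {V : Finset (EuclideanSpace ℝ (Fin d))}
    {o w : EuclideanSpace ℝ (Fin d)} (hw : w ∈ (polarAt V o).extremePoints ℝ) :
    Submodule.span ℝ {y | ∃ v ∈ V, ⟪w, v - o⟫ = 1 ∧ y = v - o} = ⊤ := by
  rw [← Submodule.orthogonal_eq_bot_iff, Submodule.eq_bot_iff]
  intro h hh
  rw [Submodule.mem_orthogonal] at hh
  by_contra hne
  have hev : ∀ k : EuclideanSpace ℝ (Fin d),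
      (∀ v ∈ V, ⟪w, v - o⟫ = 1 → ⟪k, v - o⟫ = 0) →
      ∀ᶠ δ : ℝ in nhdsWithin 0 (Set.Ioi 0), w + δ • k ∈ polarAt V o := by
    intro k hk
    refine (Filter.eventually_all_finset V).2 fun v hv => ?_
    rcases (hw.1 v hv).lt_or_eq with hlt | heq
    · have hc : Continuous fun δ : ℝ => ⟪w + δ • k, v - o⟫ := by fun_prop
      have := hc.continuousAt.eventually_lt (x₀ := (0 : ℝ)) continuousAt_const
        (by simpa using hlt : ⟪w + (0 : ℝ) • k, v - o⟫ < 1)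
      exact (this.filter_mono nhdsWithin_le_nhds).mono fun δ hδ => hδ.le
    · refine Filter.Eventually.of_forall fun δ => ?_
      rw [inner_add_left, real_inner_smul_left, hk v hv heq, heq]
      simp
  have horth : ∀ v ∈ V, ⟪w, v - o⟫ = 1 → ⟪h, v - o⟫ = 0 := fun v hv hv1 => by
    rw [real_inner_comm]
    exact hh _ (Submodule.subset_span ⟨v, hv, hv1, rfl⟩)
  obtain ⟨δ, ⟨h1, h2⟩, hδ⟩ := (((hev h horth).and (hev (-h) fun v hv hv1 => by
    rw [inner_neg_left, horth v hv hv1, neg_zero])).and self_mem_nhdsWithin).exists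
  have hδ : 0 < δ := hδ
  have := hw.2 h1 h2 ⟨1 / 2, 1 / 2, by norm_num, by norm_num, by norm_num, by
    module⟩
  simp [hδ.ne', hne] at this

/-! ### Facets cut out by extreme points of the polar body -/

lemma affineSpan_face_eq {d : ℕ} {V : Finset (EuclideanSpace ℝ (Fin d))}
    {o w v₀ : EuclideanSpace ℝ (Fin d)} (hw : w ∈ (polarAt V o).extremePoints ℝ)
    (hv₀ : v₀ ∈ V) (hv₀w : ⟪w, v₀ - o⟫ = 1) {G : Set (EuclideanSpace ℝ (Fin d))}
    (hG : G = convexHull ℝ (V : Set (EuclideanSpace ℝ (Fin d))) ∩ {x | ⟪w, x - o⟫ = 1}) :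
    affineSpan ℝ G = AffineSubspace.mk' v₀ (ℝ ∙ w)ᗮ := by
  have hmem : ∀ v ∈ V, ⟪w, v - o⟫ = 1 → v ∈ G := fun v hv h => by
    rw [hG]
    exact ⟨subset_convexHull ℝ _ hv, h⟩
  have hv₀G : v₀ ∈ affineSpan ℝ G := subset_affineSpan ℝ _ (hmem v₀ hv₀ hv₀w)
  apply le_antisymm
  · rw [affineSpan_le]
    intro x hx
    rw [hG] at hx
    have hx2 : ⟪w, x - o⟫ = 1 := hx.2
    rw [SetLike.mem_coe, AffineSubspace.mem_mk', Submodule.mem_orthogonal_singleton_iff_inner_right,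
      vsub_eq_sub, ← sub_sub_sub_cancel_right x v₀ o, inner_sub_right, hx2, hv₀w, sub_self]
  · -- Subtracting the right multiple of `v₀ - o` moves every tight vector into the direction of `G`,
    -- and this is a linear condition, so it holds on the span of the tight vectors.
    have key : ∀ y : EuclideanSpace ℝ (Fin d),
        y - ⟪w, y⟫ • (v₀ - o) ∈ (affineSpan ℝ G).direction := by
      intro y
      have hy : y ∈ Submodule.span ℝ {y | ∃ v ∈ V, ⟪w, v - o⟫ = 1 ∧ y = v - o} := by
        rw [span_tight_eq_top hw]
        trivial
      induction hy using Submodule.span_induction with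
      | mem y hy =>
        obtain ⟨v, hv, hv1, rfl⟩ := hy
        rw [hv1, one_smul, sub_sub_sub_cancel_right]
        exact AffineSubspace.vsub_mem_direction (subset_affineSpan ℝ _ (hmem v hv hv1)) hv₀G
      | zero => simp
      | add a b _ _ ha hb =>
        rw [inner_add_right]
        convert add_mem ha hb using 1
        module
      | smul t a _ ha =>
        rw [inner_smul_right]
        convert Submodule.smul_mem _ t ha using 1
        module
    intro x hx
    rw [AffineSubspace.mem_mk', Submodule.mem_orthogonal_singleton_iff_inner_right,
      vsub_eq_sub] at hx
    have := key (x - v₀)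
    rw [hx, zero_smul, sub_zero] at this
    simpa using AffineSubspace.vadd_mem_of_mem_direction this hv₀G

/-- Every point outside a full-dimensional polytope violates a facet inequality: there is a
supporting hyperplane `⟪w, · - o⟫ = 1` strictly separating it from `conv V`, meeting `conv V` in a
facet `G`, and equal to the affine span of `G`. -/
lemma exists_facet_separating {d : ℕ} {V : Finset (EuclideanSpace ℝ (Fin d))}
    {o z : EuclideanSpace ℝ (Fin d)}
    (ho : o ∈ interior (convexHull ℝ (V : Set (EuclideanSpace ℝ (Fin d)))))
    (hz : z ∉ convexHull ℝ (V : Set (EuclideanSpace ℝ (Fin d)))) :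
    ∃ w G, 1 < ⟪w, z - o⟫ ∧
      G = convexHull ℝ (V : Set (EuclideanSpace ℝ (Fin d))) ∩ {x | ⟪w, x - o⟫ = 1} ∧
      IsFacetOf (convexHull ℝ (V : Set (EuclideanSpace ℝ (Fin d)))) G ∧
      ∀ x, x ∈ affineSpan ℝ G ↔ ⟪w, x - o⟫ = 1 := by
  obtain ⟨w, hw, hwz⟩ := exists_extreme_polar ho hz
  have hzo : z - o ≠ 0 := fun h => by
    rw [h, inner_zero_right] at hwz
    linarith
  have hw0 : w ≠ 0 := fun h => by
    rw [h, inner_zero_left] at hwz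
    linarith
  obtain ⟨v₀, hv₀, hv₀w⟩ : ∃ v₀ ∈ V, ⟪w, v₀ - o⟫ = 1 := by
    by_contra! hno
    have hempty : {y | ∃ v ∈ V, ⟪w, v - o⟫ = 1 ∧ y = v - o} = ∅ := by
      rw [Set.eq_empty_iff_forall_notMem]
      rintro y ⟨v, hv, h, -⟩
      exact hno v hv h
    have htop := span_tight_eq_top hw
    rw [hempty, Submodule.span_empty] at htop
    exact hzo ((Submodule.mem_bot ℝ).1 (htop ▸ Submodule.mem_top))
  have hspan := affineSpan_face_eq hw hv₀ hv₀w rfl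
  refine ⟨w, _, hwz, rfl, ⟨⟨Set.inter_subset_left, ?_⟩, ?_, ?_, ?_⟩, ?_⟩
  · rintro x hx y hy _ ⟨-, h1⟩ ⟨a, b, ha, hb, hab, rfl⟩
    refine ⟨hx, ?_⟩
    have h1 : ⟪w, a • x + b • y - o⟫ = 1 := h1
    have hx1 := polarAt_le hw.1 hx
    have hy1 := polarAt_le hw.1 hy
    have hsplit : a • x + b • y - o = a • (x - o) + b • (y - o) := by
      obtain rfl : b = 1 - a := by linarith
      module
    rw [hsplit, inner_add_right, inner_smul_right, inner_smul_right] at h1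
    change ⟪w, x - o⟫ = 1
    refine le_antisymm hx1 ?_
    by_contra! hlt
    nlinarith [mul_lt_mul_of_pos_left hlt ha, mul_le_mul_of_nonneg_left hy1 hb.le]
  · refine (convex_convexHull ℝ _).inter ?_
    have : {x | ⟪w, x - o⟫ = 1} = {x : EuclideanSpace ℝ (Fin d) | ⟪w, x⟫ = 1 + ⟪w, o⟫} := by
      ext x
      change ⟪w, x - o⟫ = 1 ↔ ⟪w, x⟫ = 1 + ⟪w, o⟫
      rw [inner_sub_right, sub_eq_iff_eq_add]
    rw [this]
    exact convex_hyperplane (innerₛₗ ℝ w).isLinear _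
  · exact ⟨v₀, subset_convexHull ℝ _ hv₀, hv₀w⟩
  · rw [hspan, AffineSubspace.direction_mk']
    cases d with
    | zero => exact absurd (Subsingleton.elim _ _) hw0
    | succ m =>
      have : Fact (Module.finrank ℝ (EuclideanSpace ℝ (Fin (m + 1))) = m + 1) := ⟨by simp⟩
      exact Submodule.finrank_orthogonal_span_singleton (n := m) hw0
  · intro x
    rw [hspan, AffineSubspace.mem_mk', Submodule.mem_orthogonal_singleton_iff_inner_right,
      vsub_eq_sub, ← sub_sub_sub_cancel_right x v₀ o, inner_sub_right, hv₀w, sub_eq_zero]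

/-! ### The facet inequalities and the union of pyramids -/

/-- The H-description of `P`, in terms of any family of facet inequalities exhausting the facets.
The second conjunct says that the facet found is the full intersection of `P` with its
hyperplane. -/
lemma exists_facet_violated {d : ℕ} {V : Finset (EuclideanSpace ℝ (Fin d))}
    {P : Set (EuclideanSpace ℝ (Fin d))}
    (hP : P = convexHull ℝ (V : Set (EuclideanSpace ℝ (Fin d))))
    (hfull : (interior P).Nonempty)
    {n : ℕ} {F : Fin n → Set (EuclideanSpace ℝ (Fin d))}
    (hFall : ∀ G, IsFacetOf P G → ∃ i, G = F i)
    {w : Fin n → EuclideanSpace ℝ (Fin d)} {c : Fin n → ℝ}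
    (hspan : ∀ i, (affineSpan ℝ (F i) : Set (EuclideanSpace ℝ (Fin d)))
      = {x | ⟪w i, x⟫ = c i})
    (hside : ∀ i, P ⊆ {x | ⟪w i, x⟫ ≤ c i})
    {z : EuclideanSpace ℝ (Fin d)} (hz : z ∉ P) :
    ∃ i, c i < ⟪w i, z⟫ ∧ ∀ y ∈ P, ⟪w i, y⟫ = c i → y ∈ F i := by
  obtain ⟨o, ho⟩ := hfull
  subst hP
  obtain ⟨a, G, haz, hG, hfacet, haff⟩ := exists_facet_separating ho hz
  obtain ⟨i, rfl⟩ := hFall G hfacet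
  have hiff : ∀ x, ⟪w i, x⟫ = c i ↔ ⟪a, x - o⟫ = 1 := fun x => by
    rw [← haff x, ← SetLike.mem_coe, hspan i]
    rfl
  refine ⟨i, ?_, fun y hy hyc => ?_⟩
  · have hoc : ⟪w i, o⟫ < c i := lt_of_le_of_ne (hside i (interior_subset ho)) fun h => by
      have := (hiff o).1 h
      simp at this
    -- The point where the segment from `o` to `z` crosses the hyperplane.
    have hcross := (hiff (o + ⟪a, z - o⟫⁻¹ • (z - o))).2 (by
      rw [add_sub_cancel_left, inner_smul_right]
      exact inv_mul_cancel₀ (by linarith))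
    have hpos : 0 < ⟪a, z - o⟫ := by linarith
    rw [inner_add_right, inner_smul_right, inner_sub_right (w i)] at hcross
    have h2 : ⟪w i, z⟫ - ⟪w i, o⟫ = ⟪a, z - o⟫ * (c i - ⟪w i, o⟫) := by
      rw [← hcross]
      field_simp
      ring
    nlinarith [mul_pos (sub_pos.2 haz) (sub_pos.2 hoc)]
  · rw [hG]
    exact ⟨hy, (hiff y).1 hyc⟩

/-- `conv(P ∪ {p})` is the union of the pyramids `conv(F ∪ {p})` over the facets `F`
of `P` whose halfspace containing `P` also contains `p`. -/
theorem pyramid_union_plus {d : ℕ} (V : Finset (EuclideanSpace ℝ (Fin d)))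
    (P : Set (EuclideanSpace ℝ (Fin d)))
    (hP : P = convexHull ℝ (V : Set (EuclideanSpace ℝ (Fin d))))
    (hfull : (interior P).Nonempty)
    (p : EuclideanSpace ℝ (Fin d)) (hp : p ∉ P)
    (n : ℕ) (F : Fin n → Set (EuclideanSpace ℝ (Fin d))) (hFinj : Function.Injective F)
    (hF : ∀ i, IsFacetOf P (F i)) (hFall : ∀ G, IsFacetOf P G → ∃ i, G = F i)
    (w : Fin n → EuclideanSpace ℝ (Fin d)) (c : Fin n → ℝ)
    (hspan : ∀ i, (affineSpan ℝ (F i) : Set (EuclideanSpace ℝ (Fin d)))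
      = {x | ⟪w i, x⟫ = c i})
    (hside : ∀ i, P ⊆ {x | ⟪w i, x⟫ ≤ c i}) :
    convexHull ℝ (P ∪ {p}) =
      ⋃ i ∈ {i : Fin n | ⟪w i, p⟫ ≤ c i}, convexHull ℝ (F i ∪ {p}) := by
  have hPconv : Convex ℝ P := hP ▸ convex_convexHull ℝ _
  have hPcomp : IsCompact P := hP ▸ V.finite_toSet.isCompact_convexHull ℝ
  apply Set.Subset.antisymm
  swap
  · exact Set.iUnion₂_subset fun i _ =>
      convexHull_mono (Set.union_subset_union_left _ (hF i).1.subset)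
  intro x hx
  rw [Set.union_singleton, convexHull_insert (hfull.mono interior_subset), hPconv.convexHull_eq,
    convexJoin_singleton_left, Set.mem_iUnion₂] at hx
  obtain ⟨q, hq, hx⟩ := hx
  rw [segment_eq_image'] at hx
  obtain ⟨t, ⟨ht0, ht1⟩, rfl⟩ := hx
  have hu : q - p ≠ 0 := fun h => hp (sub_eq_zero.1 h ▸ hq)
  -- The parameter `s` of the last point of `P` on the ray from `p` through `q`.
  obtain ⟨s, hsP, hsmax⟩ : ∃ s : ℝ, p + s • (q - p) ∈ P ∧
      ∀ r, p + r • (q - p) ∈ P → r ≤ s := by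
    have hcont : Continuous fun r : ℝ => p + r • (q - p) := by fun_prop
    have hcl : IsClosed {r : ℝ | p + r • (q - p) ∈ P} := hPcomp.isClosed.preimage hcont
    have hbd : Bornology.IsBounded {r : ℝ | p + r • (q - p) ∈ P} := by
      obtain ⟨R, hR⟩ := hPcomp.isBounded.exists_norm_le
      refine (Metric.isBounded_closedBall (x := (0 : ℝ))
        (r := (R + ‖p‖) / ‖q - p‖)).subset fun r hr => ?_
      rw [mem_closedBall_zero_iff, le_div_iff₀ (norm_pos_iff.2 hu), ← norm_smul]
      calc ‖r • (q - p)‖ = ‖(p + r • (q - p)) - p‖ := by rw [add_sub_cancel_left]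
        _ ≤ ‖p + r • (q - p)‖ + ‖p‖ := norm_sub_le _ _
        _ ≤ R + ‖p‖ := by linarith [hR _ hr]
    have hcomp := Metric.isCompact_of_isClosed_isBounded hcl hbd
    obtain ⟨s, hs, hmax⟩ := hcomp.exists_isGreatest ⟨1, by simpa using hq⟩
    exact ⟨s, hs, fun r hr => hmax hr⟩
  have hs1 : 1 ≤ s := hsmax 1 (by simpa using hq)
  -- A facet inequality that is violated immediately after `s`; finiteness of the set of facets
  -- allows one to choose it independently of the point beyond `s`.
  obtain ⟨i, hi, hic, hiu⟩ : ∃ i, p + s • (q - p) ∈ F i ∧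
      ⟪w i, p + s • (q - p)⟫ = c i ∧ 0 < ⟪w i, q - p⟫ := by
    by_contra! hno
    have hev : ∀ i, (∀ y ∈ P, ⟪w i, y⟫ = c i → y ∈ F i) →
        ∀ᶠ r : ℝ in nhdsWithin s (Set.Ioi s), ⟪w i, p + r • (q - p)⟫ ≤ c i := by
      intro i hgood
      have hle : ⟪w i, p + s • (q - p)⟫ ≤ c i := hside i hsP
      rcases hle.lt_or_eq with hlt | heq
      · have hc : Continuous fun r : ℝ => ⟪w i, p + r • (q - p)⟫ := by fun_prop
        have := hc.continuousAt.eventually_lt (x₀ := s) continuousAt_const hlt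
        exact (this.filter_mono nhdsWithin_le_nhds).mono fun r hr => hr.le
      · have hneg := hno i (hgood _ hsP heq) heq
        filter_upwards [self_mem_nhdsWithin] with r hr
        have hr : s < r := hr
        rw [inner_add_right, inner_smul_right] at heq ⊢
        nlinarith
    have hall : ∀ᶠ r : ℝ in nhdsWithin s (Set.Ioi s), ∀ i,
        (∀ y ∈ P, ⟪w i, y⟫ = c i → y ∈ F i) → ⟪w i, p + r • (q - p)⟫ ≤ c i := by
      refine Filter.eventually_all.2 fun i => ?_
      by_cases hgood : ∀ y ∈ P, ⟪w i, y⟫ = c i → y ∈ F i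
      · exact (hev i hgood).mono fun r hr _ => hr
      · exact Filter.Eventually.of_forall fun r h => absurd h hgood
    obtain ⟨r, hr, hsr⟩ := (hall.and self_mem_nhdsWithin).exists
    have hsr : s < r := hsr
    obtain ⟨i, hi, hgood⟩ := exists_facet_violated hP hfull hFall hspan hside
      (fun h => absurd (hsmax r h) (not_le.2 hsr))
    linarith [hr i hgood]
  refine Set.mem_iUnion₂.2 ⟨i, ?_, ?_⟩
  · change ⟪w i, p⟫ ≤ c i
    rw [inner_add_right, inner_smul_right] at hic
    nlinarith
  · refine (convex_convexHull ℝ (F i ∪ {p})).segment_subset (subset_convexHull ℝ _ (Or.inr rfl))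
      (subset_convexHull ℝ _ (Or.inl hi)) ?_
    rw [segment_eq_image']
    refine ⟨t / s, ⟨by positivity, (div_le_one (by linarith)).2 (by linarith)⟩, ?_⟩
    simp only [add_sub_cancel_left, smul_smul]
    rw [div_mul_cancel₀ t (by linarith)]
end

section
/- Let P ⊂ ℝ^d be a full-dimensional polytope and u ∈ S^{d−1} a direction not lying on any hyperplane v^⊥ for v a nonzero vertex of P (i.e. ⟨u,v⟩ ≠ 0 for all nonzero vertices v of P). Then the polytope Q = P ∩ u^⊥ satisfies f₀(Q) ≤ f₁(P) − (d−1), where f₀(Q) is the number of vertices of Q and f₁(P) the number of edges of P. -/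
/-!
Write `N` for the vertex set of `P`; full-dimensionality gives `|N| ≥ d + 1`. A vertex `q` of the
section `Q = P ∩ u^⊥` that is not a vertex of `P` lies on an edge of `P` that crosses `u^⊥` at `q`
only (`exists_crossing_edge`), so distinct such `q` give distinct crossing edges. By genericity the
only vertex of `P` that can be a vertex of `Q` is the origin.

It remains to find enough edges that do not cross `u^⊥`. Perturb `u` to a vector `f` that takes
distinct values on `N` without changing the strict sign of `u` at any nonzero vertex
(`exists_generic_mem`). As in the simplex algorithm, every vertex that does not maximise `f` is the
lower end of an edge (`exists_increasing_edge`). Hence the vertices with `f ≥ 0`, apart from the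
maximum, give distinct edges in the half-space `f ≥ 0`, and symmetrically for `f ≤ 0`
(`exists_edges_nonneg` for `f` and `-f`). None of these edges has points strictly on both sides of
`u^⊥`, and the two families are disjoint. Together they have at least `|N| - 2 + δ ≥ d - 1 + δ`
members, where `δ ∈ {0, 1}` counts the origin if it is a vertex of `P`, since it is counted on both
sides. The surplus `δ` pays for the vertex `0` of `Q`, so no case distinction is needed.
-/

open scoped RealInnerProductSpace

/-- An edge of a polytope: a one-dimensional face. -/
def IsEdgeOf {d : ℕ} (P F : Set (EuclideanSpace ℝ (Fin d))) : Prop :=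
  IsExtreme ℝ P F ∧ Convex ℝ F ∧ Module.finrank ℝ (affineSpan ℝ F).direction = 1

/-! ### Generic directions -/

/-- A nonempty open set of directions contains one that is orthogonal to none of finitely many
given nonzero vectors. -/
lemma exists_generic_mem {E : Type*} [NormedAddCommGroup E] [InnerProductSpace ℝ E]
    [FiniteDimensional ℝ E] {U S : Set E} (hU : IsOpen U) (hne : U.Nonempty) (hS : S.Finite)
    (h0 : ∀ s ∈ S, s ≠ 0) : ∃ g ∈ U, ∀ s ∈ S, ⟪g, s⟫ ≠ 0 := by
  have hcomplete : CompleteSpace E := FiniteDimensional.complete ℝ E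
  have hopen : ∀ s : E, IsOpen {g : E | ⟪g, s⟫ ≠ 0} := fun s =>
    isOpen_ne_fun (by fun_prop) continuous_const
  have hdense : ∀ s ∈ S, Dense {g : E | ⟪g, s⟫ ≠ 0} := by
    intro s hs
    have h : interior (((ℝ ∙ s)ᗮ : Submodule ℝ E) : Set E) = ∅ := by
      by_contra hcon
      have htop := Submodule.eq_top_of_nonempty_interior' (ℝ ∙ s)ᗮ
        (Set.nonempty_iff_ne_empty.2 hcon)
      have hmem : s ∈ (ℝ ∙ s)ᗮ := htop ▸ Submodule.mem_top
      rw [Submodule.mem_orthogonal_singleton_iff_inner_left] at hmem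
      exact h0 s hs (inner_self_eq_zero.1 hmem)
    rw [interior_eq_empty_iff_dense_compl] at h
    convert h using 1
    ext g
    simp [Submodule.mem_orthogonal_singleton_iff_inner_left]
  have hD := dense_biInter_of_isOpen (fun s _ => hopen s) hS.countable hdense
  obtain ⟨g, hgU, hg⟩ := hD.inter_open_nonempty U hU hne
  exact ⟨g, hgU, fun s hs => by simpa using Set.mem_iInter₂.1 hg s hs⟩

/-! ### Faces and vertices of a polytope -/

/-- No three distinct extreme points of a set are collinear. -/
lemma not_collinear_of_mem_extremePoints {E : Type*} [AddCommGroup E] [Module ℝ E] {P : Set E}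
    {v w x : E} (hv : v ∈ P.extremePoints ℝ) (hw : w ∈ P.extremePoints ℝ)
    (hx : x ∈ P.extremePoints ℝ) (hwv : w ≠ v) (hxv : x ≠ v) (hwx : w ≠ x) (r : ℝ) :
    x - v ≠ r • (w - v) := by
  intro h
  have hxe : x = v + r • (w - v) := by rw [← h]; abel
  rcases lt_trichotomy r 0 with hr | rfl | hr
  · refine hwv (hv.2 hw.1 hx.1 ⟨-r / (1 - r), 1 / (1 - r), ?_, ?_, ?_, ?_⟩)
    · exact div_pos (by linarith) (by linarith)
    · exact div_pos (by linarith) (by linarith)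
    · have : 1 - r ≠ 0 := by linarith
      field_simp; ring
    · have : 1 - r ≠ 0 := by linarith
      rw [hxe]
      match_scalars
      all_goals field_simp
      all_goals ring
  · exact hxv (by simpa using hxe)
  · rcases lt_trichotomy r 1 with hr1 | rfl | hr1
    · exact hxv (hx.2 hv.1 hw.1 ⟨1 - r, r, by linarith, hr, by ring, by
        rw [hxe]; module⟩).symm
    · exact hwx (by rw [hxe]; module)
    · refine hwv (hw.2 hv.1 hx.1 ⟨1 - 1 / r, 1 / r, ?_, by positivity, by ring, ?_⟩).symm
      · have : 1 / r < 1 := by rw [div_lt_one hr]; exact hr1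
        linarith
      · rw [hxe]
        match_scalars <;> field_simp <;> ring

/-- A face of `conv S` is the convex hull of the points of `S` on it. The reason is that
`conv (F ∩ S) ∪ (conv S \ F)` is a convex set containing `S`. -/
lemma IsExtreme.eq_convexHull_inter {E : Type*} [AddCommGroup E] [Module ℝ E] {S F : Set E}
    (hF : IsExtreme ℝ (convexHull ℝ S) F) (hconv : Convex ℝ F) :
    F = convexHull ℝ (F ∩ S) := by
  have hsub : convexHull ℝ (F ∩ S) ⊆ F := convexHull_min Set.inter_subset_left hconv
  refine Set.Subset.antisymm ?_ hsub
  have hP := convex_convexHull ℝ S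
  have hK : Convex ℝ (convexHull ℝ (F ∩ S) ∪ (convexHull ℝ S \ F)) := by
    rw [convex_iff_openSegment_subset]
    have hmix : ∀ x ∈ convexHull ℝ S, ∀ y ∈ convexHull ℝ S \ F, ∀ z ∈ openSegment ℝ x y,
        z ∈ convexHull ℝ S \ F := fun x hx y hy z hz =>
      ⟨hP.openSegment_subset hx hy.1 hz,
        fun hzF => hy.2 (hF.right_mem_of_mem_openSegment hx hy.1 hzF hz)⟩
    rintro x hx y hy z hz
    have hxP : x ∈ convexHull ℝ S := hx.elim (fun h => hF.subset (hsub h)) (fun h => h.1)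
    have hyP : y ∈ convexHull ℝ S := hy.elim (fun h => hF.subset (hsub h)) (fun h => h.1)
    rcases hy with hy | hy
    · rcases hx with hx | hx
      · exact Or.inl ((convex_convexHull ℝ _).openSegment_subset hx hy hz)
      · exact Or.inr (hmix y hyP x hx z (openSegment_symm ℝ x y ▸ hz))
    · exact Or.inr (hmix x hxP y hy z hz)
  intro x hx
  have : x ∈ convexHull ℝ (F ∩ S) ∪ (convexHull ℝ S \ F) := by
    refine convexHull_min (fun s hs => ?_) hK (hF.subset hx)
    by_cases hsF : s ∈ F
    · exact Or.inl (subset_convexHull ℝ _ ⟨hsF, hs⟩)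
    · exact Or.inr ⟨subset_convexHull ℝ _ hs, hsF⟩
  exact this.resolve_right fun h => h.2 hx

lemma finite_isEdgeOf {d : ℕ} {S : Set (EuclideanSpace ℝ (Fin d))} (hS : S.Finite) :
    {e | IsEdgeOf (convexHull ℝ S) e}.Finite := by
  refine Set.Finite.subset (hS.finite_subsets.image (convexHull ℝ)) ?_
  intro e he
  exact ⟨e ∩ S, Set.inter_subset_right, (he.1.eq_convexHull_inter he.2.1).symm⟩

/-- A polytope is the convex hull of its vertices. -/
lemma convexHull_extremePoints_of_finite {E : Type*} [NormedAddCommGroup E] [NormedSpace ℝ E]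
    {S : Set E} (hS : S.Finite) :
    convexHull ℝ ((convexHull ℝ S).extremePoints ℝ) = convexHull ℝ S := by
  have h := closure_convexHull_extremePoints (hS.isCompact_convexHull ℝ) (convex_convexHull ℝ S)
  have hfin : ((convexHull ℝ S).extremePoints ℝ).Finite :=
    hS.subset extremePoints_convexHull_subset
  rwa [(hfin.isClosed_convexHull ℝ).closure_eq] at h

lemma le_ncard_of_convexHull_interior_nonempty {d : ℕ} {N : Set (EuclideanSpace ℝ (Fin d))}
    (hN : N.Finite) (hfull : (interior (convexHull ℝ N)).Nonempty) : d + 1 ≤ N.ncard := by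
  have htop := affineSpan_eq_top_of_nonempty_interior hfull
  have hne : N.Nonempty := by
    rw [Set.nonempty_iff_ne_empty]
    rintro rfl
    simp at hfull
  have := hN.fintype
  have := hne.to_subtype
  have h := finrank_vectorSpan_range_add_one_le ℝ (fun x : N => (x : EuclideanSpace ℝ (Fin d)))
  rw [Subtype.range_coe, ← direction_affineSpan, htop, AffineSubspace.direction_top, finrank_top,
    finrank_euclideanSpace_fin] at h
  rwa [← Nat.card_coe_set_eq, Nat.card_eq_fintype_card]

/-! ### Edges that increase a linear function -/

/-- A vertex of a polytope is the unique minimiser, among the vertices, of some linear function. -/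
lemma exists_inner_lt_of_mem_extremePoints {E : Type*} [NormedAddCommGroup E]
    [InnerProductSpace ℝ E] [FiniteDimensional ℝ E] {N P : Set E} (hN : N.Finite)
    (hP : convexHull ℝ N = P) {v : E} (hv : v ∈ P.extremePoints ℝ) :
    ∃ g : E, ∀ w ∈ N, w ≠ v → ⟪g, v⟫ < ⟪g, w⟫ := by
  have hcomplete : CompleteSpace E := FiniteDimensional.complete ℝ E
  have hconv : Convex ℝ P := hP ▸ convex_convexHull ℝ N
  have hnot : v ∉ convexHull ℝ (N \ {v}) := by
    have h := ((hconv.mem_extremePoints_iff_mem_sdiff_convexHull_sdiff).1 hv).2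
    exact fun hmem => h (convexHull_mono
      (Set.sdiff_subset_sdiff_left (hP ▸ subset_convexHull ℝ N)) hmem)
  obtain ⟨l, c, hlv, hlc⟩ := geometric_hahn_banach_point_closed (convex_convexHull ℝ (N \ {v}))
    ((hN.subset Set.sdiff_subset).isClosed_convexHull ℝ) hnot
  refine ⟨(InnerProductSpace.toDual ℝ E).symm l, fun w hw hwv => ?_⟩
  simp only [InnerProductSpace.toDual_symm_apply]
  exact hlv.trans (hlc w (subset_convexHull ℝ _ ⟨hw, hwv⟩))

/-- If a linear function `h` attains its maximum over the vertices exactly at `v` and `w`, then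
the segment `[v, w]` is an edge. -/
lemma isEdgeOf_segment {d : ℕ} {N P : Set (EuclideanSpace ℝ (Fin d))}
    (hP : convexHull ℝ N = P) {v w h : EuclideanSpace ℝ (Fin d)} (hv : v ∈ N) (hw : w ∈ N)
    (hvw : v ≠ w) (heq : ⟪h, w⟫ = ⟪h, v⟫)
    (hlt : ∀ x ∈ N, x ≠ v → x ≠ w → ⟪h, x⟫ < ⟪h, v⟫) : IsEdgeOf P (segment ℝ v w) := by
  subst hP
  have hle : ∀ x ∈ convexHull ℝ N, ⟪h, x⟫ ≤ ⟪h, v⟫ := by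
    refine convexHull_min (fun x hx => ?_)
      (convex_halfSpace_le (innerSL ℝ h).isLinear ⟪h, v⟫)
    by_cases h1 : x = v
    · exact h1 ▸ le_refl ⟪h, v⟫
    by_cases h2 : x = w
    · exact h2 ▸ heq.le
    exact (hlt x hx h1 h2).le
  have hvP := subset_convexHull ℝ N hv
  have hexp : IsExposed ℝ (convexHull ℝ N) {x ∈ convexHull ℝ N | ∀ y ∈ convexHull ℝ N,
      innerSL ℝ h y ≤ innerSL ℝ h x} := fun _ => ⟨innerSL ℝ h, rfl⟩
  have hF := hexp.isExtreme
  have hFc := hexp.convex (convex_convexHull ℝ N)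
  have hinter : {x ∈ convexHull ℝ N | ∀ y ∈ convexHull ℝ N,
      innerSL ℝ h y ≤ innerSL ℝ h x} ∩ N = {v, w} := by
    ext x
    simp only [innerSL_apply_apply, Set.mem_inter_iff, Set.mem_ofPred_eq, Set.mem_insert_iff,
      Set.mem_singleton_iff]
    constructor
    · rintro ⟨⟨-, hx⟩, hxN⟩
      by_contra! hcon
      exact absurd (hlt x hxN hcon.1 hcon.2) (not_lt.2 (hx v hvP))
    · rintro (rfl | rfl)
      · exact ⟨⟨hvP, hle⟩, hv⟩
      · exact ⟨⟨subset_convexHull ℝ N hw, fun y hy => heq ▸ hle y hy⟩, hw⟩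
  have hseg := hF.eq_convexHull_inter hFc
  rw [hinter, convexHull_pair] at hseg
  rw [hseg] at hF hFc
  refine ⟨hF, hFc, ?_⟩
  rw [direction_affineSpan, vectorSpan_segment, vsub_eq_sub]
  exact finrank_span_singleton (sub_ne_zero.2 hvw.symm)

/-- From a vertex `v` that does not maximise the linear function `f` (injective on the vertices)
some edge leads to a vertex with a larger value of `f`. Choose `g` minimised over the vertices
only at `v`; then a vertex `w` maximising the slope `⟪f, w - v⟫ / ⟪g, w - v⟫` is joined to `v` by
an edge as soon as this maximiser is unique, which holds for generic `g`. -/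
lemma exists_increasing_edge {d : ℕ} {N P : Set (EuclideanSpace ℝ (Fin d))} (hN : N.Finite)
    (hNP : N = P.extremePoints ℝ) (hP : convexHull ℝ N = P) {f v m : EuclideanSpace ℝ (Fin d)}
    (hf : ∀ x ∈ N, ∀ y ∈ N, x ≠ y → ⟪f, x⟫ ≠ ⟪f, y⟫) (hv : v ∈ N) (hm : m ∈ N)
    (hvm : ⟪f, v⟫ < ⟪f, m⟫) :
    ∃ w ∈ N, ⟪f, v⟫ < ⟪f, w⟫ ∧ IsEdgeOf P (segment ℝ v w) := by
  have hfin : (N \ {v}).Finite := hN.subset Set.sdiff_subset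
  -- Two vertices have the same slope exactly when `g` is orthogonal to one of these vectors.
  let s : EuclideanSpace ℝ (Fin d) × EuclideanSpace ℝ (Fin d) → EuclideanSpace ℝ (Fin d) :=
    fun p => ⟪f, p.1 - v⟫ • (p.2 - v) - ⟪f, p.2 - v⟫ • (p.1 - v)
  have hSfin : (s '' {p | p ∈ (N \ {v}) ×ˢ (N \ {v}) ∧ p.1 ≠ p.2}).Finite :=
    ((hfin.prod hfin).subset fun p hp => hp.1).image s
  have hS0 : ∀ t ∈ s '' {p | p ∈ (N \ {v}) ×ˢ (N \ {v}) ∧ p.1 ≠ p.2}, t ≠ 0 := by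
    rintro _ ⟨⟨w, x⟩, ⟨⟨⟨hw, hwv⟩, hx, hxv⟩, hwx⟩, rfl⟩ h0
    simp only [Set.mem_singleton_iff] at hwv hxv hwx
    have hfw : ⟪f, w - v⟫ ≠ 0 := by
      rw [inner_sub_right]; exact sub_ne_zero.2 (hf w hw v hv hwv)
    refine not_collinear_of_mem_extremePoints (hNP ▸ hv) (hNP ▸ hw) (hNP ▸ hx) hwv hxv hwx
      (⟪f, x - v⟫ / ⟪f, w - v⟫) ?_
    have h1 : ⟪f, w - v⟫ • (x - v) = ⟪f, x - v⟫ • (w - v) := sub_eq_zero.1 h0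
    rw [div_eq_inv_mul, mul_smul, ← h1, smul_smul, inv_mul_cancel₀ hfw, one_smul]
  have hUopen : IsOpen {g : EuclideanSpace ℝ (Fin d) | ∀ w ∈ N \ {v}, ⟪g, v⟫ < ⟪g, w⟫} := by
    have : {g : EuclideanSpace ℝ (Fin d) | ∀ w ∈ N \ {v}, ⟪g, v⟫ < ⟪g, w⟫} =
        ⋂ w ∈ N \ {v}, {g | ⟪g, v⟫ < ⟪g, w⟫} := by ext; simp
    rw [this]
    exact hfin.isOpen_biInter fun w _ => isOpen_lt (by fun_prop) (by fun_prop)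
  obtain ⟨g₀, hg₀⟩ := exists_inner_lt_of_mem_extremePoints hN hP (hNP ▸ hv)
  obtain ⟨g, hgU, hgS⟩ := exists_generic_mem hUopen
    ⟨g₀, fun w hw => hg₀ w hw.1 hw.2⟩ hSfin hS0
  have hgpos : ∀ w ∈ N \ {v}, 0 < ⟪g, w - v⟫ := fun w hw => by
    rw [inner_sub_right]; exact sub_pos.2 (hgU w hw)
  have hmv : m ∈ N \ {v} := ⟨hm, by rintro rfl; exact lt_irrefl _ hvm⟩
  obtain ⟨w, hw, hwmax⟩ := hfin.exists_maximalFor (fun w => ⟪f, w - v⟫ / ⟪g, w - v⟫) _ ⟨m, hmv⟩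
  have hwmax' : ∀ x ∈ N \ {v}, ⟪f, x - v⟫ / ⟪g, x - v⟫ ≤ ⟪f, w - v⟫ / ⟪g, w - v⟫ :=
    fun x hx => (le_total _ _).elim id (fun h => hwmax hx h)
  set r := ⟪f, w - v⟫ / ⟪g, w - v⟫ with hr
  have hfw : ⟪f, w - v⟫ = r * ⟪g, w - v⟫ := by
    rw [hr, div_mul_cancel₀ _ (hgpos w hw).ne']
  have hrpos : 0 < r := by
    refine lt_of_lt_of_le ?_ (hwmax' m hmv)
    refine div_pos ?_ (hgpos m hmv)
    rw [inner_sub_right]; exact sub_pos.2 hvm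
  refine ⟨w, hw.1, ?_, ?_⟩
  · have := mul_pos hrpos (hgpos w hw)
    rw [← hfw, inner_sub_right] at this
    linarith
  · refine isEdgeOf_segment (h := f - r • g) hP hv hw.1 (Ne.symm hw.2) ?_ ?_
    · have := hfw
      simp only [inner_sub_right, inner_sub_left, real_inner_smul_left] at this ⊢
      linarith
    · intro x hx hxv hxw
      have hle := hwmax' x ⟨hx, hxv⟩
      rw [div_le_iff₀ (hgpos x ⟨hx, hxv⟩)] at hle
      have hne : ⟪f, x - v⟫ ≠ r * ⟪g, x - v⟫ := by
        intro h
        refine hgS _ ⟨(w, x), ⟨⟨hw, hx, hxv⟩, Ne.symm hxw⟩, rfl⟩ ?_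
        simp only [s]
        rw [inner_sub_right, real_inner_smul_right, real_inner_smul_right, h, hfw]
        ring
      have hlt := lt_of_le_of_ne hle hne
      simp only [inner_sub_right, inner_sub_left, real_inner_smul_left] at hlt ⊢
      linarith

/-! ### Vertices of the section and crossing edges -/

/-- The directions in which one can move from `q` both forwards and backwards inside the convex
set `P`: the direction space of the smallest face of `P` containing `q`. -/
def faceDirection {E : Type*} [AddCommGroup E] [Module ℝ E] {P : Set E} (hP : Convex ℝ P) {q : E}
    (hq : q ∈ P) : Submodule ℝ E where
  carrier := {t | ∃ ε : ℝ, 0 < ε ∧ q + ε • t ∈ P ∧ q - ε • t ∈ P}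
  zero_mem' := ⟨1, one_pos, by simpa using hq, by simpa using hq⟩
  add_mem' := by
    rintro s t ⟨ε, hε, hs, hs'⟩ ⟨δ, hδ, ht, ht'⟩
    have hne : ε + δ ≠ 0 := by positivity
    have hsum : δ / (ε + δ) + ε / (ε + δ) = 1 := by field_simp; ring
    refine ⟨ε * δ / (ε + δ), by positivity, ?_, ?_⟩
    · convert hP hs ht (a := δ / (ε + δ)) (b := ε / (ε + δ)) (by positivity) (by positivity)
        hsum using 1
      match_scalars <;> field_simp
      ring
    · convert hP hs' ht' (a := δ / (ε + δ)) (b := ε / (ε + δ)) (by positivity) (by positivity)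
        hsum using 1
      match_scalars <;> field_simp
      ring
  smul_mem' := by
    rintro c t ⟨ε, hε, ht, ht'⟩
    rcases lt_trichotomy c 0 with hc | rfl | hc
    · have h : (ε / -c) • c • t = -(ε • t) := by
        rw [smul_smul, ← neg_smul]; congr 1; field_simp [hc.ne]
      refine ⟨ε / -c, div_pos hε (neg_pos.2 hc), ?_, ?_⟩
      · rwa [h, ← sub_eq_add_neg]
      · rwa [h, sub_neg_eq_add]
    · exact ⟨1, one_pos, by simpa using hq, by simpa using hq⟩
    · have h : (ε / c) • c • t = ε • t := by
        rw [smul_smul]; congr 1; field_simp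
      exact ⟨ε / c, div_pos hε hc, by rwa [h], by rwa [h]⟩

lemma sub_mem_faceDirection {E : Type*} [AddCommGroup E] [Module ℝ E] {P : Set E}
    (hP : Convex ℝ P) {q : E} (hq : q ∈ P) {x y : E} (hx : x ∈ P) (hy : y ∈ P)
    (hqxy : q ∈ openSegment ℝ x y) : x - q ∈ faceDirection hP hq := by
  obtain ⟨a, b, ha, hb, hab, h⟩ := hqxy
  have hbe : b = 1 - a := by linarith
  refine ⟨a * b, mul_pos ha hb, ?_, ?_⟩
  · convert hP hq hx (a := 1 - a * b) (b := a * b) (by nlinarith) (by positivity) (by ring) using 1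
    module
  · -- As `x - q = b (x - y)`, going backwards stays on the segment from `x` to `y`.
    convert hP hx hy (a := a - a * b * b) (b := b + a * b * b)
      (by nlinarith [mul_pos ha hb, mul_pos (mul_pos ha ha) hb]) (by positivity)
      (by linarith) using 1
    rw [← h, hbe]
    module

/-- The points of `P` reached from `q` along `faceDirection` form a face of `P`. -/
lemma isExtreme_faceDirection {E : Type*} [AddCommGroup E] [Module ℝ E] {P : Set E}
    (hP : Convex ℝ P) {q : E} (hq : q ∈ P) :
    IsExtreme ℝ P {x ∈ P | x - q ∈ faceDirection hP hq} := by
  refine ⟨fun x hx => hx.1, ?_⟩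
  rintro x hx y hy z ⟨-, ε, hε, -, hz⟩ ⟨a, b, ha, hb, hab, rfl⟩
  refine ⟨hx, ?_⟩
  -- `q` lies between `x` and a convex combination of `y` and a point beyond `q`.
  have hy' : (ε * b / (1 + ε * b)) • y + (1 / (1 + ε * b)) • (q - ε • (a • x + b • y - q)) ∈ P :=
    hP hy hz (by positivity) (by positivity) (by field_simp; ring)
  refine sub_mem_faceDirection hP hq hx hy' ⟨ε * a / (1 + ε), (1 + ε * b) / (1 + ε),
    by positivity, by positivity, ?_, ?_⟩
  · field_simp
    linear_combination ε * hab
  · match_scalars <;> field_simp <;> ring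

lemma convex_faceDirection {E : Type*} [AddCommGroup E] [Module ℝ E] {P : Set E}
    (hP : Convex ℝ P) {q : E} (hq : q ∈ P) :
    Convex ℝ {x ∈ P | x - q ∈ faceDirection hP hq} := by
  rintro x ⟨hx, hxL⟩ y ⟨hy, hyL⟩ a b ha hb hab
  refine ⟨hP hx hy ha hb hab, ?_⟩
  have h := (faceDirection hP hq).add_mem ((faceDirection hP hq).smul_mem a hxL)
    ((faceDirection hP hq).smul_mem b hyL)
  convert h using 1
  have hbe : b = 1 - a := by linarith
  rw [hbe]; module

lemma direction_faceDirection {E : Type*} [AddCommGroup E] [Module ℝ E] {P : Set E}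
    (hP : Convex ℝ P) {q : E} (hq : q ∈ P) :
    (affineSpan ℝ {x ∈ P | x - q ∈ faceDirection hP hq}).direction = faceDirection hP hq := by
  have hqF : q ∈ {x ∈ P | x - q ∈ faceDirection hP hq} := ⟨hq, by simp⟩
  rw [direction_affineSpan, vectorSpan_eq_span_vsub_set_right ℝ hqF]
  refine le_antisymm (Submodule.span_le.2 ?_) ?_
  · rintro _ ⟨x, hx, rfl⟩
    exact hx.2
  · intro t ht
    obtain ⟨ε, hε, h1, h2⟩ := id ht
    have hmem : q + ε • t ∈ {x ∈ P | x - q ∈ faceDirection hP hq} :=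
      ⟨h1, by simpa using (faceDirection hP hq).smul_mem ε ht⟩
    have h := Submodule.smul_mem _ ε⁻¹ (Submodule.subset_span (R := ℝ)
      (Set.mem_image_of_mem (fun x => x -ᵥ q) hmem))
    simpa [smul_smul, hε.ne'] using h

/-- A vertex `q` of the section that is not a vertex of `P` is the only common point of `u^⊥` and
an edge of `P` with points strictly on both sides of `u^⊥`. Indeed the smallest face of `P`
containing `q` has no nonzero direction in `u^⊥`, so it is at most one-dimensional. -/
lemma exists_crossing_edge {d : ℕ} {P : Set (EuclideanSpace ℝ (Fin d))} (hP : Convex ℝ P)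
    {u q : EuclideanSpace ℝ (Fin d)}
    (hq : q ∈ Set.extremePoints ℝ (P ∩ {x | ⟪x, u⟫ = 0})) (hqP : q ∉ P.extremePoints ℝ) :
    ∃ F, IsEdgeOf P F ∧ q ∈ F ∧ (∀ x ∈ F, ⟪x, u⟫ = 0 → x = q) ∧
      (∃ x ∈ F, ⟪x, u⟫ < 0) ∧ ∃ x ∈ F, 0 < ⟪x, u⟫ := by
  obtain ⟨⟨hqmem, hqu⟩, hqext⟩ := hq
  have hqu : ⟪q, u⟫ = 0 := hqu
  set L := faceDirection hP hqmem with hL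
  have hLu : ∀ t ∈ L, ⟪t, u⟫ = 0 → t = 0 := by
    rintro t ⟨ε, hε, h1, h2⟩ htu
    have h := hqext (x₁ := q + ε • t) ⟨h1, by simp [inner_add_left, real_inner_smul_left, htu, hqu]⟩
      (x₂ := q - ε • t) ⟨h2, by simp [inner_sub_left, real_inner_smul_left, htu, hqu]⟩
      ⟨1 / 2, 1 / 2, by norm_num, by norm_num, by norm_num, by module⟩
    simpa [hε.ne'] using h
  have hle : Module.finrank ℝ L ≤ 1 := by
    have hinj : Function.Injective ((innerₗ _ u).comp L.subtype) := by
      rw [← LinearMap.ker_eq_bot, LinearMap.ker_eq_bot']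
      intro t ht
      have ht' : ⟪u, (t : EuclideanSpace ℝ (Fin d))⟫ = 0 := ht
      exact Subtype.ext (hLu t t.2 (by rw [real_inner_comm]; exact ht'))
    simpa using LinearMap.finrank_le_finrank_of_injective hinj
  have hbot : L ≠ ⊥ := by
    intro hbot
    refine hqP ⟨hqmem, fun x hx y hy hxy => ?_⟩
    have hmem : x - q ∈ L := sub_mem_faceDirection hP hqmem hx hy hxy
    rw [hbot, Submodule.mem_bot] at hmem
    exact sub_eq_zero.1 hmem
  refine ⟨{x ∈ P | x - q ∈ L}, ⟨isExtreme_faceDirection hP hqmem, convex_faceDirection hP hqmem, ?_⟩,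
    ⟨hqmem, by simp⟩, ?_, ?_⟩
  · rw [direction_faceDirection hP hqmem]
    have h0 : Module.finrank ℝ L ≠ 0 := Submodule.finrank_eq_zero.not.2 hbot
    exact le_antisymm hle (Nat.one_le_iff_ne_zero.2 h0)
  · rintro x ⟨-, hx⟩ hxu
    exact sub_eq_zero.1 (hLu _ hx (by rw [inner_sub_left, hxu, hqu, sub_zero]))
  · obtain ⟨t, ht, ht0⟩ := Submodule.exists_mem_ne_zero_of_ne_bot hbot
    obtain ⟨ε, hε, h1, h2⟩ := id ht
    have hF1 : q + ε • t ∈ {x ∈ P | x - q ∈ L} := ⟨h1, by simpa using L.smul_mem ε ht⟩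
    have hF2 : q - ε • t ∈ {x ∈ P | x - q ∈ L} :=
      ⟨h2, by simpa [sub_eq_add_neg] using L.smul_mem (-ε) ht⟩
    have hv1 : ⟪q + ε • t, u⟫ = ε * ⟪t, u⟫ := by
      rw [inner_add_left, real_inner_smul_left, hqu, zero_add]
    have hv2 : ⟪q - ε • t, u⟫ = -(ε * ⟪t, u⟫) := by
      rw [inner_sub_left, real_inner_smul_left, hqu, zero_sub]
    rcases lt_or_gt_of_ne (fun h => ht0 (hLu t ht h)) with h | h
    · exact ⟨⟨_, hF1, by nlinarith⟩, _, hF2, by nlinarith⟩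
    · exact ⟨⟨_, hF2, by nlinarith⟩, _, hF1, by nlinarith⟩

/-! ### Counting edges on either side -/

/-- If `f` takes distinct values on the vertices, then the half-space `f ≥ 0` contains at
least as many edges as vertices, up to one: every vertex in it other than the maximum of `f` is the
lower end of an edge. -/
lemma exists_edges_nonneg {d : ℕ} {N P : Set (EuclideanSpace ℝ (Fin d))} (hN : N.Finite)
    (hNP : N = P.extremePoints ℝ) (hP : convexHull ℝ N = P) (hne : N.Nonempty)
    {f : EuclideanSpace ℝ (Fin d)} (hf : ∀ x ∈ N, ∀ y ∈ N, x ≠ y → ⟪f, x⟫ ≠ ⟪f, y⟫) :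
    ∃ A : Set (Set (EuclideanSpace ℝ (Fin d))),
      (∀ e ∈ A, IsEdgeOf P e ∧ ∃ v ∈ N, ∃ w ∈ N, e = segment ℝ v w ∧ 0 ≤ ⟪f, v⟫ ∧ ⟪f, v⟫ < ⟪f, w⟫) ∧
      {v ∈ N | 0 ≤ ⟪f, v⟫}.ncard ≤ A.ncard + 1 := by
  obtain ⟨m, hm, hmax⟩ := hN.exists_maximalFor (fun x => ⟪f, x⟫) N hne
  have hlt : ∀ v ∈ N, v ≠ m → ⟪f, v⟫ < ⟪f, m⟫ := fun v hv hvm =>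
    lt_of_le_of_ne ((le_total _ _).elim id (fun h => hmax hv h)) (hf v hv m hm hvm)
  have hex : ∀ v, v ∈ N → v ≠ m → ∃ w ∈ N, ⟪f, v⟫ < ⟪f, w⟫ ∧ IsEdgeOf P (segment ℝ v w) :=
    fun v hv hvm => exists_increasing_edge hN hNP hP hf hv hm (hlt v hv hvm)
  choose! w hwN hwlt hwe using hex
  refine ⟨(fun v => segment ℝ v (w v)) '' ({v ∈ N | 0 ≤ ⟪f, v⟫} \ {m}), ?_, ?_⟩
  · rintro _ ⟨v, ⟨⟨hv, hv0⟩, hvm⟩, rfl⟩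
    exact ⟨hwe v hv hvm, v, hv, w v, hwN v hv hvm, rfl, hv0, hwlt v hv hvm⟩
  · -- The lower end is the minimiser of `f` on the segment, so it is determined by the edge.
    have hinj : Set.InjOn (fun v => segment ℝ v (w v)) ({v ∈ N | 0 ≤ ⟪f, v⟫} \ {m}) := by
      have key : ∀ v ∈ N, v ≠ m → ∀ x ∈ segment ℝ v (w v), ⟪f, v⟫ ≤ ⟪f, x⟫ := by
        intro v hv hvm x hx
        exact (convex_halfSpace_ge (innerSL ℝ f).isLinear ⟪f, v⟫).segment_subset
          (le_refl ⟪f, v⟫) (hwlt v hv hvm).le hx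
      rintro v ⟨⟨hv, -⟩, hvm⟩ x ⟨⟨hx, -⟩, hxm⟩ h
      have h : segment ℝ v (w v) = segment ℝ x (w x) := h
      by_contra hne
      exact hf v hv x hx hne (le_antisymm
        (key v hv hvm x (h ▸ left_mem_segment ℝ x (w x)))
        (key x hx hxm v (h ▸ left_mem_segment ℝ v (w v))))
    rw [hinj.ncard_image]
    have := Set.ncard_le_ncard_sdiff_add_ncard {v ∈ N | 0 ≤ ⟪f, v⟫} {m}
    rwa [Set.ncard_singleton] at this

/-! ### The vertex bound -/

/-- For a generic direction `u` (one with `⟨u,v⟩ ≠ 0` for all nonzero vertices `v` of `P`),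
the section `Q = P ∩ u^⊥` has at most `f₁(P) − (d−1)` vertices. -/
theorem section_vertex_bound {d : ℕ} (hd : 2 ≤ d)
    (V : Finset (EuclideanSpace ℝ (Fin d)))
    (P : Set (EuclideanSpace ℝ (Fin d)))
    (hP : P = convexHull ℝ (V : Set (EuclideanSpace ℝ (Fin d))))
    (hfull : (interior P).Nonempty)
    (u : EuclideanSpace ℝ (Fin d)) (hu : ‖u‖ = 1)
    (hgen : ∀ v ∈ Set.extremePoints ℝ P, v ≠ 0 → ⟪u, v⟫ ≠ 0) :
    Set.ncard (Set.extremePoints ℝ (P ∩ {x | ⟪x, u⟫ = 0})) ≤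
      Set.ncard {e | IsEdgeOf P e} - (d - 1) := by
  have hconv : Convex ℝ P := hP ▸ convex_convexHull ℝ _
  have hVfin : (V : Set (EuclideanSpace ℝ (Fin d))).Finite := V.finite_toSet
  obtain ⟨N, hNP⟩ : ∃ N, N = P.extremePoints ℝ := ⟨_, rfl⟩
  have hN : N.Finite := by
    rw [hNP, hP]; exact hVfin.subset extremePoints_convexHull_subset
  have hNhull : convexHull ℝ N = P := by
    rw [hNP, hP]; exact convexHull_extremePoints_of_finite hVfin
  have hcard : d + 1 ≤ N.ncard :=
    le_ncard_of_convexHull_interior_nonempty hN (by rwa [hNhull])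
  have hNne : N.Nonempty := by
    rw [Set.nonempty_iff_ne_empty]; rintro rfl; simp at hcard
  have hEfin : {e | IsEdgeOf P e}.Finite := hNhull ▸ finite_isEdgeOf hN
  -- A perturbation `f` of `u` that separates the vertices and keeps the nonzero signs.
  obtain ⟨f, hfU, hfS⟩ : ∃ f ∈ {g : EuclideanSpace ℝ (Fin d) | ∀ v ∈ N \ {0},
      0 < ⟪u, v⟫ * ⟪g, v⟫}, ∀ s ∈ (fun p : EuclideanSpace ℝ (Fin d) × EuclideanSpace ℝ (Fin d) =>
        p.1 - p.2) '' {p | p ∈ N ×ˢ N ∧ p.1 ≠ p.2}, ⟪f, s⟫ ≠ 0 := by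
    refine exists_generic_mem ?_ ⟨u, ?_⟩ (((hN.prod hN).subset fun p hp => hp.1).image _) ?_
    · have : {g : EuclideanSpace ℝ (Fin d) | ∀ v ∈ N \ {0}, 0 < ⟪u, v⟫ * ⟪g, v⟫} =
          ⋂ v ∈ N \ {0}, {g | 0 < ⟪u, v⟫ * ⟪g, v⟫} := by ext; simp
      rw [this]
      exact (hN.subset Set.sdiff_subset).isOpen_biInter fun v _ =>
        isOpen_lt (by fun_prop) (by fun_prop)
    · rintro v ⟨hv, hv0⟩
      exact mul_self_pos.2 (hgen v (hNP ▸ hv) hv0)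
    · rintro _ ⟨p, ⟨-, hp⟩, rfl⟩
      exact sub_ne_zero.2 hp
  have hfinj : ∀ x ∈ N, ∀ y ∈ N, x ≠ y → ⟪f, x⟫ ≠ ⟪f, y⟫ := by
    intro x hx y hy hxy h
    exact hfS _ ⟨(x, y), ⟨⟨hx, hy⟩, hxy⟩, rfl⟩ (by simp [inner_sub_right, h])
  have hsign : ∀ v ∈ N, 0 ≤ ⟪f, v⟫ → 0 ≤ ⟪v, u⟫ := by
    intro v hv h
    by_cases hv0 : v = 0
    · simp [hv0]
    · have := hfU v ⟨hv, hv0⟩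
      rw [real_inner_comm]
      by_contra! hcon
      nlinarith
  have hsign' : ∀ v ∈ N, 0 ≤ ⟪-f, v⟫ → ⟪v, u⟫ ≤ 0 := by
    intro v hv h
    by_cases hv0 : v = 0
    · simp [hv0]
    · have := hfU v ⟨hv, hv0⟩
      rw [inner_neg_left] at h
      rw [real_inner_comm]
      by_contra! hcon
      nlinarith
  obtain ⟨A, hA, hAcard⟩ := exists_edges_nonneg hN hNP hNhull hNne hfinj
  obtain ⟨B, hB, hBcard⟩ := exists_edges_nonneg (f := -f) hN hNP hNhull hNne
    (fun x hx y hy hxy h => hfinj x hx y hy hxy (by simpa [inner_neg_left] using h))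
  set Q := Set.extremePoints ℝ (P ∩ {x | ⟪x, u⟫ = 0}) with hQ
  have hex : ∀ q, q ∈ Q \ N → ∃ F, IsEdgeOf P F ∧ q ∈ F ∧ (∀ x ∈ F, ⟪x, u⟫ = 0 → x = q) ∧
      (∃ x ∈ F, ⟪x, u⟫ < 0) ∧ ∃ x ∈ F, 0 < ⟪x, u⟫ :=
    fun q hq => exists_crossing_edge hconv hq.1 (hNP ▸ hq.2)
  choose! F hFe hqF hFq hFneg hFpos using hex
  have hFinj : Set.InjOn F (Q \ N) := by
    intro p hp q hq h
    exact hFq q hq p (h ▸ hqF p hp) hp.1.1.2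
  set C := F '' (Q \ N) with hC
  have hCE : C ⊆ {e | IsEdgeOf P e} := by
    rintro _ ⟨q, hq, rfl⟩; exact hFe q hq
  have hCfin := hEfin.subset hCE
  have hAE : A ⊆ {e | IsEdgeOf P e} := fun e he => (hA e he).1
  have hBE : B ⊆ {e | IsEdgeOf P e} := fun e he => (hB e he).1
  have hQNfin : (Q \ N).Finite := Set.Finite.of_finite_image hCfin hFinj
  -- Edges in `A` lie in `⟪·, u⟫ ≥ 0`, those in `B` in `⟪·, u⟫ ≤ 0`; those in `C` cross `u^⊥`.
  have hAB : Disjoint A B := by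
    rw [Set.disjoint_left]
    intro e heA heB
    obtain ⟨-, v, -, w, -, rfl, hv, hvw⟩ := hA e heA
    obtain ⟨-, v', -, w', -, heq, hv', hvw'⟩ := hB _ heB
    have hw : w ∈ segment ℝ v' w' := heq ▸ right_mem_segment ℝ v w
    have := (convex_halfSpace_ge (innerSL ℝ (-f)).isLinear 0).segment_subset
      hv' (hv'.trans hvw'.le) hw
    have this : 0 ≤ ⟪-f, w⟫ := this
    rw [inner_neg_left] at this
    linarith
  have hABC : Disjoint (A ∪ B) C := by
    rw [Set.disjoint_left]
    rintro e heAB ⟨q, hq, rfl⟩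
    rcases heAB with he | he
    · obtain ⟨x, hx, hxu⟩ := hFneg q hq
      obtain ⟨-, v, hv, w, hw, heq, hv0, hvw⟩ := hA _ he
      have : 0 ≤ ⟪u, x⟫ := (convex_halfSpace_ge (innerSL ℝ u).isLinear 0).segment_subset
        (show 0 ≤ ⟪u, v⟫ by rw [real_inner_comm]; exact hsign v hv hv0)
        (show 0 ≤ ⟪u, w⟫ by rw [real_inner_comm]; exact hsign w hw (hv0.trans hvw.le))
        (heq ▸ hx)
      rw [real_inner_comm] at this
      linarith
    · obtain ⟨x, hx, hxu⟩ := hFpos q hq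
      obtain ⟨-, v, hv, w, hw, heq, hv0, hvw⟩ := hB _ he
      have : ⟪u, x⟫ ≤ 0 := (convex_halfSpace_le (innerSL ℝ u).isLinear 0).segment_subset
        (show ⟪u, v⟫ ≤ 0 by rw [real_inner_comm]; exact hsign' v hv hv0)
        (show ⟪u, w⟫ ≤ 0 by rw [real_inner_comm]; exact hsign' w hw (hv0.trans hvw.le))
        (heq ▸ hx)
      rw [real_inner_comm] at this
      linarith
  have hE : A.ncard + B.ncard + C.ncard ≤ {e | IsEdgeOf P e}.ncard := by
    rw [← Set.ncard_union_eq hAB (hEfin.subset hAE) (hEfin.subset hBE),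
      ← Set.ncard_union_eq hABC (hEfin.subset (Set.union_subset hAE hBE)) hCfin]
    exact Set.ncard_le_ncard (Set.union_subset (Set.union_subset hAE hBE) hCE) hEfin
  have hCcard : C.ncard = (Q \ N).ncard := hFinj.ncard_image
  -- The vertices with `f = 0` are counted in both half-spaces, and only the origin can be such a
  -- vertex; this makes up for the origin being possibly a vertex of the section.
  have hpos : {v ∈ N | 0 ≤ ⟪f, v⟫}.Finite := hN.subset fun v hv => hv.1
  have hneg : {v ∈ N | 0 ≤ ⟪-f, v⟫}.Finite := hN.subset fun v hv => hv.1
  have hunion : {v ∈ N | 0 ≤ ⟪f, v⟫} ∪ {v ∈ N | 0 ≤ ⟪-f, v⟫} = N := by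
    ext v
    simp only [Set.mem_union, Set.mem_ofPred_eq, inner_neg_left, neg_nonneg, ← and_or_left]
    exact and_iff_left_of_imp fun _ => le_total _ _
  have hcount := Set.ncard_union_add_ncard_inter {v ∈ N | 0 ≤ ⟪f, v⟫} {v ∈ N | 0 ≤ ⟪-f, v⟫}
    hpos hneg
  rw [hunion] at hcount
  have hQcard : Q.ncard ≤ (Q \ N).ncard +
      ({v ∈ N | 0 ≤ ⟪f, v⟫} ∩ {v ∈ N | 0 ≤ ⟪-f, v⟫}).ncard := by
    refine (Set.ncard_le_ncard ?_ (hQNfin.union (hpos.inter_of_left _))).trans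
      (Set.ncard_union_le _ _)
    intro q hq
    by_cases hqN : q ∈ N
    · right
      have hq0 : q = 0 := by
        by_contra h0
        have hqu : ⟪q, u⟫ = 0 := hq.1.2
        exact hgen q (hNP ▸ hqN) h0 (by rw [real_inner_comm]; exact hqu)
      exact ⟨⟨hqN, by simp [hq0]⟩, hqN, by simp [hq0]⟩
    · exact Or.inl ⟨hq, hqN⟩
  omega
end
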